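/- arXiv:1212.5694 — 13 statements merged into one kernel-verified Lean document; each statement's English description precedes it below -/
import Mathlib

section
/- Let R be a commutative ring with 1 ≠ 0 and let X_1,…,X_n ⊆ R be finite nonempty subsets with d_j := |X_j| − 1, X := X_1 × ⋯ × X_n, and N(x) := ∏_{j=1}^n ∏_{x̂ ∈ X_j, x̂ ≠ x_j} (x_j − x̂) for x ∈ X. The following are equivalent: (i) for all j and all distinct x, x̃ ∈ X_j the difference x − x̃ is not a zero divisor in R; (ii) for all x ∈ X, N(x) is not a zero divisor in R; (iii) the evaluation map φ, sending a polynomial P ∈ R[X_1,…,X_n] whose partial degree in X_j is at most d_j for every j to the function X → R, x ↦ P(x), is injective. -/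
lemma uni_zero {R : Type*} [CommRing R] [Nontrivial R] [DecidableEq R] (S : Finset R)
    (hS : ∀ x ∈ S, ∀ w ∈ S, x ≠ w → x - w ∈ nonZeroDivisors R) :
    ∀ p : Polynomial R, p.degree < (S.card : WithBot ℕ) → (∀ x ∈ S, p.eval x = 0) → p = 0 := by
  induction S using Finset.induction_on with
  | empty =>
    intro p hp _
    apply Polynomial.degree_eq_bot.mp
    simpa using hp
  | insert a S ha ih =>
    intro p hp he
    obtain ⟨q, rfl⟩ := Polynomial.dvd_iff_isRoot.mpr (he a (Finset.mem_insert_self a S))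
    have hq : q = 0 := by
      apply ih
      · intro x hx w hw
        exact hS x (Finset.mem_insert_of_mem hx) w (Finset.mem_insert_of_mem hw)
      · rw [mul_comm, (Polynomial.monic_X_sub_C a).degree_mul, Polynomial.degree_X_sub_C,
          Finset.card_insert_of_notMem ha] at hp
        by_cases h0 : q = 0
        · simp [h0]
        · rw [Polynomial.degree_eq_natDegree h0] at hp ⊢
          norm_cast at hp ⊢
          omega
      · intro x hx
        have h1 := he x (Finset.mem_insert_of_mem hx)
        have hne : x ≠ a := fun h => ha (h ▸ hx)
        have h2 := hS x (Finset.mem_insert_of_mem hx) a (Finset.mem_insert_self a S) hne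
        simp only [Polynomial.eval_mul, Polynomial.eval_sub, Polynomial.eval_X,
          Polynomial.eval_C] at h1
        exact (mul_left_mem_nonZeroDivisors_eq_zero_iff h2).mp h1
    simp [hq]

lemma mv_zero {R : Type*} [CommRing R] [Nontrivial R] [DecidableEq R] : ∀ {n : ℕ}
    (X : Fin n → Finset R)
    (_ : ∀ j, ∀ x ∈ X j, ∀ w ∈ X j, x ≠ w → x - w ∈ nonZeroDivisors R)
    (P : MvPolynomial (Fin n) R) (_ : ∀ j, P.degreeOf j < (X j).card)
    (_ : ∀ x : Fin n → R, (∀ j, x j ∈ X j) → MvPolynomial.eval x P = 0), P = 0 := by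
  intro n
  induction n with
  | zero =>
    intro X _ P _ he
    have := he Fin.elim0 (fun j => j.elim0)
    rw [MvPolynomial.eq_C_of_isEmpty P] at this ⊢
    rw [MvPolynomial.eval_C] at this
    rw [this, MvPolynomial.C_0]
  | succ n ih =>
    intro X hX P hd he
    suffices h : MvPolynomial.finSuccEquiv R n P = 0 by
      simpa using h
    ext1 i
    rw [Polynomial.coeff_zero]
    apply ih (fun j => X j.succ) (fun j => hX j.succ)
    · intro j
      exact (MvPolynomial.degreeOf_coeff_finSuccEquiv P j i).trans_lt (hd j.succ)
    · intro x hx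
      have h0 : Polynomial.map (MvPolynomial.eval x) (MvPolynomial.finSuccEquiv R n P) = 0 := by
        apply uni_zero (X 0) (hX 0)
        · refine Polynomial.degree_map_le.trans_lt ?_
          refine Polynomial.degree_le_natDegree.trans_lt ?_
          rw [MvPolynomial.natDegree_finSuccEquiv]
          exact_mod_cast hd 0
        · intro y hy
          rw [← MvPolynomial.eval_eq_eval_mv_eval']
          apply he
          intro j
          refine Fin.cases ?_ (fun k => ?_) j
          · simpa using hy
          · simpa using hx k
      have := congrArg (fun q => q.coeff i) h0
      simpa using this

open MvPolynomial Finset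

/-- Equivalent characterizations of integral grids: differences are non-zero-divisors
iff all `N(x)` are non-zero-divisors iff evaluation on polynomials of bounded partial
degrees is injective. -/
theorem integral_grid_tfae {R : Type*} [CommRing R] [Nontrivial R] [DecidableEq R] {n : ℕ}
    (X : Fin n → Finset R) (hX : ∀ j, (X j).Nonempty)
    (d : Fin n → ℕ) (hd : ∀ j, d j = (X j).card - 1) :
    ((∀ j, ∀ x ∈ X j, ∀ w ∈ X j, x ≠ w → x - w ∈ nonZeroDivisors R)
      ↔ (∀ x : Fin n → R, (∀ j, x j ∈ X j) →
          (∏ j, ∏ z ∈ (X j).erase (x j), (x j - z)) ∈ nonZeroDivisors R))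
    ∧
    ((∀ x : Fin n → R, (∀ j, x j ∈ X j) →
          (∏ j, ∏ z ∈ (X j).erase (x j), (x j - z)) ∈ nonZeroDivisors R)
      ↔ (∀ P Q : MvPolynomial (Fin n) R,
          (∀ j, P.degreeOf j ≤ d j) → (∀ j, Q.degreeOf j ≤ d j) →
          (∀ x : Fin n → R, (∀ j, x j ∈ X j) →
            MvPolynomial.eval x P = MvPolynomial.eval x Q) →
          P = Q)) := by

  have h12 : (∀ j, ∀ x ∈ X j, ∀ w ∈ X j, x ≠ w → x - w ∈ nonZeroDivisors R)
      → (∀ x : Fin n → R, (∀ j, x j ∈ X j) →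
          (∏ j, ∏ z ∈ (X j).erase (x j), (x j - z)) ∈ nonZeroDivisors R) := by
    intro h x hx
    refine prod_mem fun j _ => prod_mem fun z hz => ?_
    rw [Finset.mem_erase] at hz
    exact h j _ (hx j) z hz.2 hz.1.symm
  have h21 : (∀ x : Fin n → R, (∀ j, x j ∈ X j) →
          (∏ j, ∏ z ∈ (X j).erase (x j), (x j - z)) ∈ nonZeroDivisors R) →
      (∀ j, ∀ x ∈ X j, ∀ w ∈ X j, x ≠ w → x - w ∈ nonZeroDivisors R) := by
    intro h j x hx w hw hne
    choose y hy using hX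
    have h1 := h (Function.update y j x) (by
      intro k
      by_cases hk : k = j
      · subst hk; simpa using hx
      · simpa [hk] using hy k)
    rw [← Finset.mul_prod_erase _ _ (Finset.mem_univ j), mul_mem_nonZeroDivisors] at h1
    have h2 := h1.1
    rw [Function.update_self, ← Finset.mul_prod_erase _ _
      (Finset.mem_erase.mpr ⟨hne.symm, hw⟩), mul_mem_nonZeroDivisors] at h2
    exact h2.1
  refine ⟨⟨h12, h21⟩, ?_, ?_⟩
  · intro h P Q hP hQ he
    rw [← sub_eq_zero]
    apply mv_zero X (h21 h)
    · intro j
      have := MvPolynomial.degreeOf_sub_le j P Q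
      have h1 := hP j
      have h2 := hQ j
      have h3 := hd j
      have h4 := (hX j).card_pos
      have h5 := max_le h1 h2
      omega
    · intro x hx
      rw [map_sub, he x hx, sub_self]
  · intro h
    apply h12
    intro j x hx w hw hne
    rw [mem_nonZeroDivisors_iff_right]
    intro c hc
    have h0 := h (C c * ∏ z ∈ (X j).erase x, (MvPolynomial.X j - C z)) 0 (by
      intro k
      refine (degreeOf_C_mul_le _ _ _).trans ((degreeOf_prod_le _ _ _).trans ?_)
      by_cases hk : k = j
      · subst hk
        refine (Finset.sum_le_card_nsmul _ _ 1 ?_).trans ?_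
        · intro z _
          refine (degreeOf_sub_le _ _ _).trans ?_
          simp [degreeOf_X, degreeOf_C]
        · rw [hd, Finset.card_erase_of_mem hx]; simp
      · refine (Finset.sum_nonpos ?_).trans (Nat.zero_le _)
        intro z _
        refine (degreeOf_sub_le _ _ _).trans ?_
        simp [degreeOf_X, degreeOf_C, hk]) (by simp) (by
      intro y hy
      simp only [map_mul, map_prod, map_sub, eval_C, eval_X, map_zero]
      by_cases hyx : y j = x
      · rw [hyx, ← Finset.mul_prod_erase _ _
          (Finset.mem_erase.mpr ⟨hne.symm, hw⟩), ← mul_assoc, hc, zero_mul]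
      · rw [Finset.prod_eq_zero (Finset.mem_erase.mpr ⟨hyx, hy j⟩) (sub_self _), mul_zero])
    have h1 := congrArg (MvPolynomial.aeval (fun _ : Fin n => (Polynomial.X : Polynomial R))) h0
    simp only [map_mul, map_prod, map_sub, aeval_X, map_zero, algHom_C,
      Polynomial.algebraMap_eq] at h1
    have hm : (∏ z ∈ (X j).erase x, (Polynomial.X - Polynomial.C z)).Monic :=
      Polynomial.monic_prod_of_monic _ _ fun z _ => Polynomial.monic_X_sub_C z
    have h2 := congrArg Polynomial.leadingCoeff h1
    rw [Polynomial.leadingCoeff_mul_monic hm] at h2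
    simpa using h2
end

section
/- Let R be a commutative ring and X = X_1 × ⋯ × X_n a d-grid such that N(x) is a unit in R for every x ∈ X (a division grid; e.g. any grid over a field). Then for every polynomial P ∈ R[X_1,…,X_n] with partial degrees deg_{X_j}(P) ≤ d_j for all j, and every multiindex δ with δ_j ≤ d_j for all j, the coefficient of X^δ in P equals Σ_{x ∈ X} ψ_{δ,x} · N(x)^{−1} · P(x). -/
open MvPolynomial Finset

/-- Univariate coefficient formula on monomials. -/
lemma univ_formula {R : Type*} [CommRing R] [DecidableEq R] (S : Finset R)
    (hN : ∀ a ∈ S, IsUnit (∏ z ∈ S.erase a, (a - z))) (k e : ℕ) (hk : k < S.card)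
    (he : e < S.card) :
    ∑ a ∈ S, (∑ Γ ∈ (S.erase a).powersetCard (S.card - 1 - e), ∏ γ ∈ Γ, (-γ))
      * Ring.inverse (∏ z ∈ S.erase a, (a - z)) * a ^ k = if k = e then 1 else 0 := by
  nontriviality R
  let L : R → Polynomial R := fun a => ∏ z ∈ S.erase a, (Polynomial.X + Polynomial.C (-z))
  let Q : Polynomial R :=
    ∑ a ∈ S, Polynomial.C (Ring.inverse (∏ z ∈ S.erase a, (a - z)) * a ^ k) * L a
  have hLdeg : ∀ a ∈ S, (L a).degree < S.card := by
    intro a ha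
    refine lt_of_le_of_lt (Polynomial.degree_prod_le _ _) ?_
    simp only [Polynomial.degree_X_add_C, Finset.sum_const, Finset.card_erase_of_mem ha]
    rw [nsmul_one]
    have : S.card - 1 < S.card := by omega
    exact_mod_cast this
  have hQdeg : (Q - Polynomial.X ^ k).degree < (S.card : WithBot ℕ) := by
    refine lt_of_le_of_lt (Polynomial.degree_sub_le _ _) (max_lt ?_ ?_)
    · refine lt_of_le_of_lt (Polynomial.degree_sum_le _ _) ?_
      refine (Finset.sup_lt_iff (WithBot.bot_lt_coe _)).2 ?_
      intro a ha
      rw [← Polynomial.smul_eq_C_mul]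
      exact lt_of_le_of_lt (Polynomial.degree_smul_le _ _) (hLdeg a ha)
    · rw [Polynomial.degree_X_pow]
      exact_mod_cast hk
  have hev : ∀ b ∈ S, (Q - Polynomial.X ^ k).eval b = 0 := by
    intro b hb
    simp only [Q, L, Polynomial.eval_sub, Polynomial.eval_finsetSum, Polynomial.eval_mul,
      Polynomial.eval_C, Polynomial.eval_prod, Polynomial.eval_add, Polynomial.eval_X,
      Polynomial.eval_pow, ← sub_eq_add_neg]
    rw [Finset.sum_eq_single_of_mem b hb]
    · rw [mul_right_comm, Ring.inverse_mul_cancel _ (hN b hb), one_mul, sub_self]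
    · intro a ha hab
      rw [Finset.prod_eq_zero (Finset.mem_erase.2 ⟨hab.symm, hb⟩) (sub_self b), mul_zero]
  have hdvd : (∏ a ∈ S, (Polynomial.X - Polynomial.C a)) ∣ Q - Polynomial.X ^ k := by
    refine Finset.prod_dvd_of_coprime ?_ ?_
    · intro a ha b hb hab
      refine Polynomial.isCoprime_X_sub_C_of_isUnit_sub ?_
      exact isUnit_of_dvd_unit (Finset.dvd_prod_of_mem (fun z => a - z)
        (Finset.mem_erase.2 ⟨hab.symm, hb⟩)) (hN a ha)
    · intro a ha
      exact Polynomial.dvd_iff_isRoot.2 (hev a ha)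
  have hQ : Q = Polynomial.X ^ k := by
    by_contra hne
    refine Polynomial.Monic.not_dvd_of_degree_lt
      (Polynomial.monic_prod_of_monic S _ fun a _ => Polynomial.monic_X_sub_C a)
      (sub_ne_zero.2 hne) ?_ hdvd
    rw [Polynomial.degree_prod_of_monic _ _ fun a _ => Polynomial.monic_X_sub_C a]
    simpa using hQdeg
  have hc := congrArg (fun p => Polynomial.coeff p e) hQ
  simp only [Q, L, Polynomial.finsetSum_coeff, Polynomial.coeff_C_mul,
    Polynomial.coeff_X_pow] at hc
  rw [show (if k = e then (1 : R) else 0) = if e = k then 1 else 0 by simp only [eq_comm], ← hc]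
  refine Finset.sum_congr rfl fun a ha => ?_
  rw [Finset.prod_X_add_C_coeff _ _ (by rw [Finset.card_erase_of_mem ha]; omega),
    Finset.card_erase_of_mem ha]
  ring

lemma inverse_prod_aux {R ι : Type*} [CommRing R] (s : Finset ι) (f : ι → R) :
    Ring.inverse (∏ j ∈ s, f j) = ∏ j ∈ s, Ring.inverse (f j) := by
  classical
  induction s using Finset.induction_on with
  | empty => simp
  | insert a s ha ih =>
    rw [Finset.prod_insert ha, Finset.prod_insert ha, Ring.mul_inverse_rev, ih, mul_comm]

/-- Interpolation/coefficient formula over a division grid: for `P` with partial degrees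
`≤ d_j` and any `δ ≤ d`, the coefficient of `X^δ` equals
`∑_{x∈X} ψ_{δ,x} N(x)⁻¹ P(x)`. -/
theorem coeff_formula_division_grid {R : Type*} [CommRing R] [DecidableEq R] {n : ℕ}
    (X : Fin n → Finset R) (hX : ∀ j, (X j).Nonempty)
    (d : Fin n → ℕ) (hd : ∀ j, d j = (X j).card - 1)
    (hN : ∀ x : Fin n → R, (∀ j, x j ∈ X j) →
      IsUnit (∏ j, ∏ z ∈ (X j).erase (x j), (x j - z)))
    (P : MvPolynomial (Fin n) R) (hP : ∀ j, P.degreeOf j ≤ d j)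
    (δ : Fin n → ℕ) (hδ : ∀ j, δ j ≤ d j) :
    MvPolynomial.coeff (Finsupp.equivFunOnFinite.symm δ) P
      = ∑ x ∈ Fintype.piFinset X,
          (∏ j, ∑ Γ ∈ ((X j).erase (x j)).powersetCard (d j - δ j), ∏ γ ∈ Γ, (-γ))
          * Ring.inverse (∏ j, ∏ z ∈ (X j).erase (x j), (x j - z))
          * MvPolynomial.eval x P := by
  have hcard : ∀ j, 0 < (X j).card := fun j => (hX j).card_pos
  have hN' : ∀ j, ∀ a ∈ X j, IsUnit (∏ z ∈ (X j).erase a, (a - z)) := by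
    intro j a ha
    choose x₀ hx₀ using hX
    have h := hN (Function.update x₀ j a) (by
      intro i
      by_cases hi : i = j
      · subst hi; simpa using ha
      · simpa [hi] using hx₀ i)
    have h2 := isUnit_of_dvd_unit (Finset.dvd_prod_of_mem _ (Finset.mem_univ j)) h
    simpa using h2
  simp only [MvPolynomial.eval_eq', inverse_prod_aux, Finset.mul_sum]
  rw [Finset.sum_comm]
  have key : ∀ m ∈ P.support, ∑ x ∈ Fintype.piFinset X,
      (∏ j, ∑ Γ ∈ ((X j).erase (x j)).powersetCard (d j - δ j), ∏ γ ∈ Γ, (-γ))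
          * (∏ j, Ring.inverse (∏ z ∈ (X j).erase (x j), (x j - z)))
          * (P.coeff m * ∏ j, x j ^ m j)
      = if m = Finsupp.equivFunOnFinite.symm δ then P.coeff m else 0 := by
    intro m hm
    have hmd : ∀ j, m j ≤ d j := fun j =>
      (MvPolynomial.monomial_le_degreeOf j hm).trans (hP j)
    have h1 : ∏ j, ∑ a ∈ X j,
        (∑ Γ ∈ ((X j).erase a).powersetCard (d j - δ j), ∏ γ ∈ Γ, (-γ))
          * Ring.inverse (∏ z ∈ (X j).erase a, (a - z)) * a ^ m j
        = ∏ j, if m j = δ j then (1 : R) else 0 := by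
      refine Finset.prod_congr rfl fun j _ => ?_
      have := hcard j
      have h3 := hd j
      have h4 := hmd j
      have h5 := hδ j
      rw [h3]
      exact univ_formula (X j) (hN' j) (m j) (δ j) (by omega) (by omega)
    rw [Finset.prod_univ_sum] at h1
    calc _ = P.coeff m * ∏ j, if m j = δ j then (1 : R) else 0 := by
          rw [← h1, Finset.mul_sum]
          refine Finset.sum_congr rfl fun x _ => ?_
          rw [Finset.prod_mul_distrib, Finset.prod_mul_distrib]
          ring
      _ = _ := by
          split_ifs with h
          · subst h; simp
          · have : ∃ j, m j ≠ δ j := by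
              by_contra! hc
              exact h (Finsupp.ext fun j => by simpa using hc j)
            obtain ⟨j, hj⟩ := this
            rw [Finset.prod_eq_zero (Finset.mem_univ j) (if_neg hj), mul_zero]
  simp only [inverse_prod_aux] at key
  rw [Finset.sum_congr rfl key, Finset.sum_ite_eq']
  split_ifs with h
  · rfl
  · simpa using h
end

section
/- Let R be a commutative ring and X = X_1 × ⋯ × X_n an integral d-grid (for all j, differences of distinct elements of X_j are non-zero-divisors; e.g. R an integral domain). Let P ∈ R[X_1,…,X_n] and let ε be a d-leading multiindex of P. If the coefficient of X^ε in P is nonzero, then there exists x ∈ X with P(x) ≠ 0. -/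
open MvPolynomial Finset

/-- Weights on a finite set extracting (a multiple of) the `e`-th coefficient. -/
lemma exists_weights {R : Type*} [CommRing R] (S : Finset R)
    (hint : ∀ x ∈ S, ∀ w ∈ S, x ≠ w → x - w ∈ nonZeroDivisors R) (e : ℕ) (he : e < S.card) :
    ∃ (w : R → R) (c : R), c ∈ nonZeroDivisors R ∧ (∑ x ∈ S, w x * x ^ e = c) ∧
      ∀ k < S.card, k ≠ e → ∑ x ∈ S, w x * x ^ k = 0 := by
  classical
  let φ := S.equivFin
  let v : Fin S.card → R := fun i => (φ.symm i : R)
  let A := Matrix.vandermonde v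
  let w : R → R := fun x => if h : x ∈ S then A.adjugate ⟨e, he⟩ (φ ⟨x, h⟩) else 0
  have key : ∀ k (hk : k < S.card), ∑ x ∈ S, w x * x ^ k
      = A.det * (1 : Matrix (Fin S.card) (Fin S.card) R) ⟨e, he⟩ ⟨k, hk⟩ := by
    intro k hk
    have h := congrFun (congrFun (Matrix.adjugate_mul A) ⟨e, he⟩) ⟨k, hk⟩
    rw [Matrix.mul_apply, Matrix.smul_apply, smul_eq_mul] at h
    rw [← h, ← Finset.sum_coe_sort S, ← φ.sum_comp]
    refine Finset.sum_congr rfl fun x _ => ?_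
    simp [w, A, v, Matrix.vandermonde_apply]
  refine ⟨w, A.det, ?_, ?_, ?_⟩
  · rw [Matrix.det_vandermonde]
    refine prod_mem fun i _ => prod_mem fun j hj => ?_
    refine hint _ (φ.symm j).2 _ (φ.symm i).2 fun h => ?_
    have := φ.symm.injective (Subtype.ext h)
    simp [this] at hj
  · rw [key e he]; simp
  · intro k hk hne
    rw [key k hk, Matrix.one_apply_ne, mul_zero]
    intro h
    exact hne (Fin.mk.inj_iff.mp h).symm

/-- Combinatorial Nullstellensatz for `d`-leading coefficients over an integral grid:
if the coefficient of `X^ε` is nonzero, then `P` does not vanish on all of `X`. -/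
theorem nonzero_of_d_leading_coeff {R : Type*} [CommRing R] {n : ℕ}
    (X : Fin n → Finset R) (hX : ∀ j, (X j).Nonempty)
    (d : Fin n → ℕ) (hd : ∀ j, d j = (X j).card - 1)
    (hint : ∀ j, ∀ x ∈ X j, ∀ w ∈ X j, x ≠ w → x - w ∈ nonZeroDivisors R)
    (P : MvPolynomial (Fin n) R) (ε : Fin n → ℕ) (hε : ∀ j, ε j ≤ d j)
    (hlead : ∀ δ : Fin n →₀ ℕ, MvPolynomial.coeff δ P ≠ 0 →
      δ = Finsupp.equivFunOnFinite.symm ε ∨ ∃ j, δ j ≠ ε j ∧ δ j ≤ d j)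
    (hcoeff : MvPolynomial.coeff (Finsupp.equivFunOnFinite.symm ε) P ≠ 0) :
    ∃ x : Fin n → R, (∀ j, x j ∈ X j) ∧ MvPolynomial.eval x P ≠ 0 := by
  classical
  have hlt : ∀ j k, k ≤ d j → k < (X j).card := by
    intro j k hk
    have h1 := hd j
    have h2 := (hX j).card_pos
    omega
  choose w c hc hw hw0 using fun j => exists_weights (X j) (hint j) (ε j) (hlt j _ (hε j))
  by_contra! hcon
  have hsum : ∑ x ∈ Fintype.piFinset X, (∏ j, w j (x j)) * MvPolynomial.eval x P = 0 :=
    Finset.sum_eq_zero fun x hx => by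
      rw [hcon x (Fintype.mem_piFinset.mp hx), mul_zero]
  have hexp : ∑ x ∈ Fintype.piFinset X, (∏ j, w j (x j)) * MvPolynomial.eval x P
      = ∑ δ ∈ P.support, coeff δ P * ∏ j, ∑ x ∈ X j, w j x * x ^ δ j := by
    simp_rw [MvPolynomial.eval_eq', Finset.prod_univ_sum, Finset.mul_sum]
    rw [Finset.sum_comm]
    refine Finset.sum_congr rfl fun δ _ => Finset.sum_congr rfl fun x _ => ?_
    rw [Finset.prod_mul_distrib]
    ring
  rw [hexp, Finset.sum_eq_single (Finsupp.equivFunOnFinite.symm ε)] at hsum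
  · have h1 : ∏ j, ∑ x ∈ X j, w j x * x ^ (Finsupp.equivFunOnFinite.symm ε) j = ∏ j, c j :=
      Finset.prod_congr rfl fun j _ => by simpa using hw j
    rw [h1] at hsum
    have h2 : ∏ j, c j ∈ nonZeroDivisors R := prod_mem fun j _ => hc j
    exact hcoeff ((mul_right_mem_nonZeroDivisors_eq_zero_iff h2).mp hsum)
  · intro δ hδ hne
    obtain h | ⟨j, hj, hjd⟩ := hlead δ (MvPolynomial.mem_support_iff.mp hδ)
    · exact absurd h hne
    · rw [Finset.prod_eq_zero (Finset.mem_univ j) (hw0 j _ (hlt j _ hjd) hj), mul_zero]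
  · intro h
    exact absurd (MvPolynomial.mem_support_iff.mpr hcoeff) h
end

section
/- Let R be a commutative ring and X = X_1 × ⋯ × X_n a d-grid such that N(x) is a unit in R for every x ∈ X (e.g. any grid over a field). Let P ∈ R[X_1,…,X_n] have total degree deg(P) ≤ d_1 + ⋯ + d_n. Then the coefficient of the monomial X_1^{d_1}⋯X_n^{d_n} in P equals Σ_{x ∈ X} N(x)^{−1} · P(x). -/
open MvPolynomial Finset

theorem cf_one {R : Type*} [CommRing R] [Nontrivial R] [DecidableEq R] (S : Finset R)
    (hS : S.Nonempty)
    (hN : ∀ x ∈ S, IsUnit (∏ z ∈ S.erase x, (x - z))) (k : ℕ) (hk : k ≤ S.card - 1) :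
    ∑ x ∈ S, Ring.inverse (∏ z ∈ S.erase x, (x - z)) * x ^ k
      = if k = S.card - 1 then 1 else 0 := by
  have hpos : 0 < S.card := hS.card_pos
  have hmon : ∀ T : Finset R, (∏ z ∈ T, (Polynomial.X - Polynomial.C z)).Monic :=
    fun T => Polynomial.monic_prod_of_monic _ _ fun z _ => Polynomial.monic_X_sub_C z
  have hnd : ∀ T : Finset R, (∏ z ∈ T, (Polynomial.X - Polynomial.C z)).natDegree = T.card := by
    intro T
    rw [Polynomial.natDegree_prod_of_monic _ _ fun z _ => Polynomial.monic_X_sub_C z]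
    simp
  set q : Polynomial R := Polynomial.X ^ k - ∑ x ∈ S,
    Polynomial.C (Ring.inverse (∏ z ∈ S.erase x, (x - z)) * x ^ k) *
      ∏ z ∈ S.erase x, (Polynomial.X - Polynomial.C z) with hq
  have hdvd : (∏ z ∈ S, (Polynomial.X - Polynomial.C z)) ∣ q := by
    apply Finset.prod_dvd_of_coprime
    · intro a ha b hb hab
      apply Polynomial.isCoprime_X_sub_C_of_isUnit_sub
      exact isUnit_of_dvd_unit (Finset.dvd_prod_of_mem (fun z => a - z)
        (Finset.mem_erase.2 ⟨hab.symm, hb⟩)) (hN a ha)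
    · intro a ha
      rw [Polynomial.dvd_iff_isRoot, Polynomial.IsRoot.def, hq]
      simp only [Polynomial.eval_sub, Polynomial.eval_pow, Polynomial.eval_X,
        Polynomial.eval_finset_sum, Polynomial.eval_mul, Polynomial.eval_C,
        Polynomial.eval_prod]
      rw [Finset.sum_eq_single a]
      · rw [mul_right_comm, Ring.inverse_mul_cancel _ (hN a ha), one_mul, sub_self]
      · intro b hb hba
        rw [Finset.prod_eq_zero (i := a) (Finset.mem_erase.2 ⟨hba.symm, ha⟩) (sub_self a),
          mul_zero]
      · intro h; exact absurd ha h
  have hdeg : q.natDegree ≤ S.card - 1 := by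
    apply (Polynomial.natDegree_sub_le _ _).trans
    apply max_le
    · simpa using hk
    · apply Polynomial.natDegree_sum_le_of_forall_le
      intro x hx
      apply (Polynomial.natDegree_C_mul_le _ _).trans
      rw [hnd, Finset.card_erase_of_mem hx]
  have hq0 : q = 0 := by
    by_contra h
    refine (hmon S).not_dvd_of_natDegree_lt h ?_ hdvd
    rw [hnd]; omega
  have hc := congrArg (fun p => Polynomial.coeff p (S.card - 1)) hq0
  simp only [hq, Polynomial.coeff_sub, Polynomial.finset_sum_coeff, Polynomial.coeff_C_mul,
    Polynomial.coeff_X_pow, Polynomial.coeff_zero] at hc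
  rw [sub_eq_zero] at hc
  rw [Finset.sum_congr rfl (g := fun x => Ring.inverse (∏ z ∈ S.erase x, (x - z)) * x ^ k)] at hc
  · rw [← hc]; simp [eq_comm]
  · intro x hx
    have h1 := (hmon (S.erase x)).coeff_natDegree
    rw [hnd, Finset.card_erase_of_mem hx] at h1
    rw [h1, mul_one]

theorem cf_inv {R : Type*} [CommRing R] {ι : Type*} (s : Finset ι) (f : ι → R) :
    Ring.inverse (∏ j ∈ s, f j) = ∏ j ∈ s, Ring.inverse (f j) := by
  classical
  induction s using Finset.induction_on with
  | empty => simp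
  | insert a s ha ih =>
    rw [Finset.prod_insert ha, Finset.prod_insert ha, Ring.mul_inverse_rev, ih, mul_comm]

/-- Coefficient formula over a division grid: if `deg(P) ≤ Σ d_j`, then the coefficient
of `X_1^{d_1}⋯X_n^{d_n}` in `P` equals `∑_{x∈X} N(x)⁻¹ P(x)`. -/
theorem coeff_formula_main {R : Type*} [CommRing R] [DecidableEq R] {n : ℕ}
    (X : Fin n → Finset R) (hX : ∀ j, (X j).Nonempty)
    (d : Fin n → ℕ) (hd : ∀ j, d j = (X j).card - 1)
    (hN : ∀ x : Fin n → R, (∀ j, x j ∈ X j) →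
      IsUnit (∏ j, ∏ z ∈ (X j).erase (x j), (x j - z)))
    (P : MvPolynomial (Fin n) R) (hdeg : P.totalDegree ≤ ∑ j, d j) :
    MvPolynomial.coeff (Finsupp.equivFunOnFinite.symm d) P
      = ∑ x ∈ Fintype.piFinset X,
          Ring.inverse (∏ j, ∏ z ∈ (X j).erase (x j), (x j - z))
          * MvPolynomial.eval x P := by
  rcases subsingleton_or_nontrivial R with _ | _
  · exact Subsingleton.elim _ _
  have hU : ∀ j, ∀ a ∈ X j, IsUnit (∏ z ∈ (X j).erase a, (a - z)) := by
    intro j a ha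
    choose y hy using hX
    have h := hN (Function.update y j a) (by
      intro i
      by_cases hi : i = j
      · subst hi; simpa using ha
      · simpa [hi] using hy i)
    have h2 := isUnit_of_dvd_unit (Finset.dvd_prod_of_mem _ (Finset.mem_univ j)) h
    simpa using h2
  have hone : ∀ j k, k ≤ d j →
      ∑ x ∈ X j, Ring.inverse (∏ z ∈ (X j).erase x, (x - z)) * x ^ k
        = if k = d j then 1 else 0 := by
    intro j k hk
    rw [hd j] at hk ⊢
    exact cf_one (X j) (hX j) (hU j) k hk
  have key : ∀ m ∈ P.support,
      ∑ x ∈ Fintype.piFinset X, Ring.inverse (∏ j, ∏ z ∈ (X j).erase (x j), (x j - z))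
          * ∏ j, x j ^ m j = if m = Finsupp.equivFunOnFinite.symm d then 1 else 0 := by
    intro m hm
    have e : ∑ x ∈ Fintype.piFinset X, Ring.inverse (∏ j, ∏ z ∈ (X j).erase (x j), (x j - z))
          * ∏ j, x j ^ m j = ∏ j, ∑ x ∈ X j,
            Ring.inverse (∏ z ∈ (X j).erase x, (x - z)) * x ^ m j := by
      rw [Finset.prod_univ_sum]
      refine Finset.sum_congr rfl fun x _ => ?_
      rw [cf_inv, Finset.prod_mul_distrib]
    rw [e]
    split_ifs with h
    · refine Finset.prod_eq_one fun j _ => ?_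
      have hj : m j = d j := by rw [h]; rfl
      rw [hone j _ hj.le, if_pos hj]
    · have hsum : ∑ j, m j ≤ ∑ j, d j := by
        have := (MvPolynomial.le_totalDegree hm).trans hdeg
        rwa [Finsupp.sum_fintype _ _ (fun _ => rfl)] at this
      have : ∃ j, m j < d j := by
        by_contra! hc
        apply h
        have h3 := (Finset.sum_eq_sum_iff_of_le (fun j _ => hc j)).1
          (le_antisymm (Finset.sum_le_sum fun j _ => hc j) hsum)
        ext j
        exact (h3 j (Finset.mem_univ j)).symm
      obtain ⟨j, hj⟩ := this
      refine Finset.prod_eq_zero (Finset.mem_univ j) ?_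
      rw [hone j _ hj.le, if_neg hj.ne]
  simp_rw [MvPolynomial.eval_eq', Finset.mul_sum]
  rw [Finset.sum_comm]
  simp_rw [mul_left_comm _ (MvPolynomial.coeff _ P), ← Finset.mul_sum]
  rw [Finset.sum_congr rfl fun m hm => by rw [key m hm]]
  simp only [mul_ite, mul_one, mul_zero, Finset.sum_ite_eq', MvPolynomial.mem_support_iff]
  split_ifs with h
  · rfl
  · exact not_not.1 h
end

section
/- Let p be a prime, q = p^k, and let X = X_1 × ⋯ × X_n ⊆ (F_q)^n be a d-grid (X_j ⊆ F_q finite nonempty, d_j := |X_j| − 1). Let P_1,…,P_m ∈ F_q[X_1,…,X_n] satisfy (q − 1) · Σ_{i=1}^m deg(P_i) < d_1 + ⋯ + d_n. Then the number of points x ∈ X with P_1(x) = ⋯ = P_m(x) = 0 is not equal to 1. -/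
open MvPolynomial Finset

theorem cwg_deg {F σ ι : Type*} [Field F] (A : Finset ι) (j : ι → σ) (s : ι → F) :
    (∏ a ∈ A, (X (j a) - C (s a) : MvPolynomial σ F)).totalDegree ≤ #A := by
  refine (totalDegree_finset_prod _ _).trans ?_
  refine (Finset.sum_le_card_nsmul _ _ 1 ?_).trans (by simp)
  intro a _
  refine (totalDegree_sub _ _).trans ?_
  simp

theorem cwg_coeff {F σ ι : Type*} [Field F] (A : Finset ι) (j : ι → σ) (s : ι → F) :
    coeff (∑ a ∈ A, Finsupp.single (j a) 1)
      (∏ a ∈ A, (X (j a) - C (s a) : MvPolynomial σ F)) = 1 := by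
  classical
  induction A using Finset.induction_on with
  | empty => simp
  | insert a A ha ih =>
    rw [Finset.prod_insert ha, Finset.sum_insert ha, sub_mul, coeff_sub, coeff_X_mul, ih,
      coeff_C_mul, coeff_eq_zero_of_totalDegree_lt, mul_zero, sub_zero]
    refine (cwg_deg A j s).trans_lt ?_
    change _ < Finsupp.degree _
    simp [map_add, map_sum]

/-- Chevalley–Warning type result on grids: over a finite field with `p^k` elements,
a system of polynomials with `(p^k − 1) Σ deg(P_i) < Σ d_j` does not have exactly one
common zero in the grid. -/
theorem chevalley_warning_grid {F : Type*} [Field F] [Fintype F]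
    (p k : ℕ) (hp : p.Prime) (hk : 0 < k) (hcard : Fintype.card F = p ^ k)
    {n m : ℕ}
    (X : Fin n → Finset F) (hX : ∀ j, (X j).Nonempty)
    (d : Fin n → ℕ) (hd : ∀ j, d j = (X j).card - 1)
    (P : Fin m → MvPolynomial (Fin n) F)
    (hdeg : (p ^ k - 1) * ∑ i, (P i).totalDegree < ∑ j, d j) :
    {x : Fin n → F | (∀ j, x j ∈ X j) ∧ ∀ i, MvPolynomial.eval x (P i) = 0}.ncard ≠ 1 := by
  classical
  intro h1
  obtain ⟨x0, hx0⟩ := Set.ncard_eq_one.mp h1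
  have hmem : ∀ x, ((∀ j, x j ∈ X j) ∧ ∀ i, MvPolynomial.eval x (P i) = 0) ↔ x = x0 := by
    intro x
    have := Set.ext_iff.mp hx0 x
    simpa using this
  obtain ⟨h0X, h0P⟩ := (hmem x0).mpr rfl
  rw [← hcard] at hdeg
  have hq : Fintype.card F - 1 ≠ 0 := by
    have := Fintype.one_lt_card (α := F)
    omega
  set f : MvPolynomial (Fin n) F := ∏ i, (1 - P i ^ (Fintype.card F - 1)) with hf
  have hfdeg : f.totalDegree < ∑ j, d j := by
    refine lt_of_le_of_lt ?_ hdeg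
    refine (totalDegree_finset_prod _ _).trans ?_
    rw [Finset.mul_sum]
    refine Finset.sum_le_sum fun i _ => ?_
    refine (totalDegree_sub _ _).trans ?_
    simpa using totalDegree_pow (P i) (Fintype.card F - 1)
  let A : Finset (Σ _ : Fin n, F) := Finset.univ.sigma fun j => (X j).erase (x0 j)
  have hA : #A = ∑ j, d j := by
    simp only [A, Finset.card_sigma]
    exact Finset.sum_congr rfl fun j _ => by rw [hd, Finset.card_erase_of_mem (h0X j)]
  set g : MvPolynomial (Fin n) F := ∏ a ∈ A, (MvPolynomial.X a.1 - C a.2) with hg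
  let t : Fin n →₀ ℕ := ∑ a ∈ A, Finsupp.single a.1 1
  have htdeg : t.degree = ∑ j, d j := by
    simp [t, map_sum, ← hA]
  have htj : ∀ j, t j = d j := by
    intro j
    simp only [t, A, Finset.sum_sigma, Finsupp.finset_sum_apply, Finsupp.single_apply]
    simp [hd, Finset.card_erase_of_mem (h0X _)]
  have hgc : coeff t g = 1 := cwg_coeff A (fun a => a.1) (fun a => a.2)
  have hgd : g.totalDegree ≤ ∑ j, d j := hA ▸ cwg_deg A (fun a => a.1) (fun a => a.2)
  set c := eval x0 g with hc
  have hcoef : coeff t (g - C c * f) = 1 := by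
    rw [coeff_sub, hgc, coeff_C_mul, coeff_eq_zero_of_totalDegree_lt, mul_zero, sub_zero]
    change _ < t.degree
    rwa [htdeg]
  have hne : coeff t (g - C c * f) ≠ 0 := by rw [hcoef]; exact one_ne_zero
  have htot : (g - C c * f).totalDegree = t.degree := by
    apply le_antisymm
    · rw [htdeg]
      refine (totalDegree_sub _ _).trans (max_le hgd ?_)
      refine (totalDegree_mul _ _).trans ?_
      simpa using hfdeg.le
    · exact le_totalDegree (mem_support_iff.mpr hne)
  obtain ⟨x, hxX, hx⟩ := combinatorial_nullstellensatz_exists_eval_nonzero _ t hne htot X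
    (fun j => by
      rw [htj, hd]
      have := (hX j).card_pos
      omega)
  apply hx
  by_cases hxx : x = x0
  · subst hxx
    have : eval x f = 1 := by
      simp [hf, map_prod, h0P, hq]
    simp [this, hc]
  · have hgx : eval x g = 0 := by
      obtain ⟨j, hj⟩ := Function.ne_iff.mp hxx
      rw [hg, map_prod]
      refine Finset.prod_eq_zero (i := ⟨j, x j⟩) ?_ (by simp)
      simp [A, hj, hxX]
    have hfx : eval x f = 0 := by
      have : ∃ i, eval x (P i) ≠ 0 := by
        by_contra! h
        exact hxx ((hmem x).mp ⟨hxX, h⟩)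
      obtain ⟨i, hi⟩ := this
      rw [hf, map_prod]
      refine Finset.prod_eq_zero (Finset.mem_univ i) ?_
      simp [FiniteField.pow_card_sub_one_eq_one _ hi]
    simp [hgx, hfx]
end

section
/- Let V be a finite set of vertices and Ē a finite set of edges with endpoint maps h, t : Ē → V such that h(e) ≠ t(e) for every e ∈ Ē (a loopless multigraph), and let e₀ ∈ Ē be a distinguished edge such that in the multigraph with edge set E := Ē ∖ {e₀} every vertex v ∈ V has degree exactly 4 (i.e. |{e ∈ E : h(e) = v}| + |{e ∈ E : t(e) = v}| = 4). Then there exists a nonempty subset S ⊆ Ē such that every vertex v ∈ V is incident to exactly 0 or exactly 3 edges of S (i.e. |{e ∈ S : h(e) = v}| + |{e ∈ S : t(e) = v}| ∈ {0, 3}). -/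
open Finset

lemma zmod_three_sq : ∀ a : ZMod 3, a ^ 2 = if a ≠ 0 then 1 else 0 := by decide

/-- Every loopless 4-regular multigraph plus one extra edge contains a nontrivial
3-regular subgraph: there is a nonempty edge set `S` such that every vertex is
incident to exactly 0 or exactly 3 edges of `S`. -/
theorem regular_subgraph_exists {V E : Type*} [Fintype V] [Fintype E]
    [DecidableEq V] [DecidableEq E]
    (h t : E → V) (hloop : ∀ e, h e ≠ t e) (e₀ : E)
    (hreg : ∀ v : V,
      (Finset.univ.filter (fun e => e ≠ e₀ ∧ h e = v)).card
        + (Finset.univ.filter (fun e => e ≠ e₀ ∧ t e = v)).card = 4) :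
    ∃ S : Finset E, S.Nonempty ∧ ∀ v : V,
      (S.filter (fun e => h e = v)).card + (S.filter (fun e => t e = v)).card = 0
      ∨ (S.filter (fun e => h e = v)).card + (S.filter (fun e => t e = v)).card = 3 := by
  classical
  have : Fact (Nat.Prime 3) := ⟨Nat.prime_three⟩
  -- the number of edges is `2 |V| + 1`
  have hcard : Fintype.card E = 2 * Fintype.card V + 1 := by
    have key : ∀ g : E → V, ∑ v : V, (Finset.univ.filter (fun e => e ≠ e₀ ∧ g e = v)).card
        = Fintype.card E - 1 := by
      intro g
      have h1 := Finset.card_eq_sum_card_fiberwise (f := g)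
        (s := Finset.univ.erase e₀) (t := (Finset.univ : Finset V)) (by intro x _; simp)
      rw [Finset.card_erase_of_mem (Finset.mem_univ _), Finset.card_univ] at h1
      rw [h1]
      refine Finset.sum_congr rfl fun v _ => ?_
      congr 1
      ext e
      simp
    have h2 : ∑ v : V, ((Finset.univ.filter (fun e => e ≠ e₀ ∧ h e = v)).card
        + (Finset.univ.filter (fun e => e ≠ e₀ ∧ t e = v)).card) = Fintype.card V * 4 := by
      rw [Finset.sum_congr rfl fun v _ => hreg v]
      simp
    rw [Finset.sum_add_distrib, key, key] at h2
    have : 0 < Fintype.card E := Fintype.card_pos_iff.mpr ⟨e₀⟩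
    omega
  let f : V → MvPolynomial E (ZMod 3) := fun v =>
    ∑ e ∈ Finset.univ.filter (fun e => h e = v), MvPolynomial.X e ^ 2
      + ∑ e ∈ Finset.univ.filter (fun e => t e = v), MvPolynomial.X e ^ 2
  have hdeg : ∀ v, (f v).totalDegree ≤ 2 := by
    intro v
    have aux : ∀ s : Finset E,
        (∑ e ∈ s, (MvPolynomial.X e ^ 2 : MvPolynomial E (ZMod 3))).totalDegree ≤ 2 := by
      intro s
      refine MvPolynomial.totalDegree_finsetSum_le fun e _ => ?_
      rw [MvPolynomial.totalDegree_X_pow]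
    exact (MvPolynomial.totalDegree_add _ _).trans (max_le (aux _) (aux _))
  have hlt : ∑ v, (f v).totalDegree < Fintype.card E := by
    calc ∑ v, (f v).totalDegree ≤ ∑ _v : V, 2 := Finset.sum_le_sum fun v _ => hdeg v
      _ = 2 * Fintype.card V := by simp [mul_comm]
      _ < Fintype.card E := by omega
  have hdvd := char_dvd_card_solutions_of_fintype_sum_lt 3 hlt
  have hzero : ∀ v, MvPolynomial.eval (0 : E → ZMod 3) (f v) = 0 := by
    intro v
    simp [f]
  have hone : 1 < Fintype.card {x : E → ZMod 3 // ∀ v, MvPolynomial.eval x (f v) = 0} := by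
    have : 0 < Fintype.card {x : E → ZMod 3 // ∀ v, MvPolynomial.eval x (f v) = 0} :=
      Fintype.card_pos_iff.mpr ⟨⟨0, hzero⟩⟩
    have := Nat.le_of_dvd this hdvd
    omega
  obtain ⟨⟨x, hx⟩, hne⟩ := Fintype.exists_ne_of_one_lt_card hone ⟨0, hzero⟩
  have hx0 : x ≠ 0 := fun hh => hne (Subtype.ext hh)
  obtain ⟨e₁, he₁⟩ := Function.ne_iff.mp hx0
  refine ⟨Finset.univ.filter (fun e => x e ≠ 0), ⟨e₁, by simpa using he₁⟩, fun v => ?_⟩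
  have hsq : ∀ a : ZMod 3, a ^ 2 = if a ≠ 0 then 1 else 0 := by
    intro a
    rw [zmod_three_sq a]
  have hev := hx v
  simp only [f, map_add, map_sum, map_pow, MvPolynomial.eval_X, hsq, Finset.sum_boole] at hev
  rw [Finset.filter_comm, Finset.filter_comm (fun e => t e = v)] at hev
  rw [← Nat.cast_add, ZMod.natCast_eq_zero_iff] at hev
  have hb : ∀ g : E → V,
      ((Finset.univ.filter (fun e => x e ≠ 0)).filter (fun e => g e = v)).card
        ≤ (Finset.univ.filter (fun e => e ≠ e₀ ∧ g e = v)).card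
          + if g e₀ = v then 1 else 0 := by
    intro g
    have hsub : ((Finset.univ.filter (fun e => x e ≠ 0)).filter (fun e => g e = v))
        ⊆ (Finset.univ.filter (fun e => e ≠ e₀ ∧ g e = v))
          ∪ (if g e₀ = v then {e₀} else ∅) := by
      intro e he
      have hge : g e = v := (Finset.mem_filter.mp he).2
      by_cases hee : e = e₀
      · subst hee
        simp [hge]
      · simp [hge, hee]
    refine (Finset.card_le_card hsub).trans ((Finset.card_union_le _ _).trans ?_)
    split_ifs <;> simp
  have hbh := hb h
  have hbt := hb t
  have hr := hreg v
  have hl : (if h e₀ = v then 1 else 0) + (if t e₀ = v then 1 else 0) ≤ 1 := by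
    have := hloop e₀
    split_ifs with h1 h2
    · exact absurd (h1.trans h2.symm) this
    all_goals simp
  omega
end

section
/- Let F be a field, n, m ∈ ℕ, and for i = 1,…,m let H_i = { x ∈ F^n : Σ_{j=1}^n a_{ij} x_j = b_i } be an affine hyperplane in F^n (so (a_{i1},…,a_{in}) ≠ 0). Suppose there is exactly one vertex x₀ of the unit cube {0,1}^n ⊆ F^n not covered, i.e. {0,1}^n ∖ (H_1 ∪ ⋯ ∪ H_m) = {x₀}. Then m ≥ n. -/
open Finset

lemma signed_monomial_sum {F : Type*} [Field F] (n m : ℕ) (hmn : m < n)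
    (φ : Fin m → Option (Fin n)) :
    ∑ s : Fin n → Bool, (∏ j, (if s j then (-1 : F) else 1)) *
      ∏ i, (φ i).elim 1 (fun j => if s j then (1 : F) else 0) = 0 := by
  classical
  obtain ⟨j, hj⟩ : ∃ j : Fin n, ∀ i, φ i ≠ some j := by
    by_contra! h
    choose g hg using h
    have hinj : Function.Injective g := by
      intro x y hxy
      have := hg x
      rw [hxy, hg y] at this
      exact (Option.some.inj this).symm
    have := Fintype.card_le_of_injective g hinj
    simp at this
    omega
  refine Finset.sum_involution (fun s _ => Function.update s j (!s j)) ?_ ?_ ?_ ?_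
  · intro s _
    have h1 : ∏ i, (φ i).elim 1
          (fun k => if (Function.update s j (!s j)) k then (1 : F) else 0) =
        ∏ i, (φ i).elim 1 (fun k => if s k then (1 : F) else 0) := by
      refine Finset.prod_congr rfl fun i _ => ?_
      rcases h : φ i with _ | k
      · rfl
      · have : k ≠ j := by
          rintro rfl
          exact hj i h
        simp [Function.update_of_ne this]
    have h2 : ∏ k, (if (Function.update s j (!s j)) k then (-1 : F) else 1) =
        - ∏ k, (if s k then (-1 : F) else 1) := by
      rw [← Finset.mul_prod_erase _ _ (Finset.mem_univ j),
        ← Finset.mul_prod_erase _ (fun k => if s k then (-1 : F) else 1) (Finset.mem_univ j)]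
      have h3 : ∏ k ∈ univ.erase j, (if (Function.update s j (!s j)) k then (-1 : F) else 1) =
          ∏ k ∈ univ.erase j, (if s k then (-1 : F) else 1) := by
        refine Finset.prod_congr rfl fun k hk => ?_
        rw [Function.update_of_ne (Finset.ne_of_mem_erase hk)]
      rw [h3]
      cases h : s j <;> simp
    rw [h1, h2]
    ring
  · intro s _ _ h
    have := congrFun h j
    simp at this
  · intro s _
    exact Finset.mem_univ _
  · intro s _
    simp

/-- Alon–Füredi: if `m` affine hyperplanes in `F^n` cover all vertices of the unit cube
`{0,1}^n` except exactly one, then `m ≥ n`. -/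
theorem cube_covering {F : Type*} [Field F] (n m : ℕ)
    (a : Fin m → Fin n → F) (b : Fin m → F) (ha : ∀ i, a i ≠ 0)
    (x₀ : Fin n → F)
    (hcover : ∀ x : Fin n → F,
      ((∀ j, x j = 0 ∨ x j = 1) ∧ ∀ i, ∑ j, a i j * x j ≠ b i) ↔ x = x₀) :
    n ≤ m := by
  classical
  by_contra! hmn
  let v : (Fin n → Bool) → Fin n → F := fun s j => if s j then 1 else 0
  have hsum : ∑ s : Fin n → Bool, (∏ j, (if s j then (-1 : F) else 1)) *
      ∏ i, (∑ j, a i j * v s j - b i) = 0 := by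
    have h1 : ∀ s : Fin n → Bool, ∏ i, (∑ j, a i j * v s j - b i) =
        ∑ φ : Fin m → Option (Fin n), (∏ i, (φ i).elim (-b i) (a i)) *
          ∏ i, (φ i).elim 1 (v s) := by
      intro s
      have h2 : ∀ i, ∑ j, a i j * v s j - b i =
          ∑ o : Option (Fin n), o.elim (-b i) (a i) * o.elim 1 (v s) := by
        intro i
        rw [Fintype.sum_option]
        simp
        ring
      simp_rw [h2, ← Finset.prod_mul_distrib]
      rw [Finset.prod_univ_sum, Fintype.piFinset_univ]
    simp_rw [h1, Finset.mul_sum]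
    rw [Finset.sum_comm]
    refine Finset.sum_eq_zero fun φ _ => ?_
    have := signed_monomial_sum (F := F) n m hmn φ
    rw [← mul_zero (∏ i, (φ i).elim (-b i) (a i)), ← this, Finset.mul_sum]
    refine Finset.sum_congr rfl fun s _ => ?_
    simp only [v]
    ring
  obtain ⟨h01, hne⟩ := (hcover x₀).2 rfl
  let s₀ : Fin n → Bool := fun j => decide (x₀ j = 1)
  have hv0 : v s₀ = x₀ := by
    funext j
    rcases h01 j with h | h <;> simp [v, s₀, h]
  rw [Finset.sum_eq_single s₀] at hsum
  · rw [hv0] at hsum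
    rcases mul_eq_zero.1 hsum with h | h
    · obtain ⟨j, _, hj⟩ := Finset.prod_eq_zero_iff.1 h
      split_ifs at hj <;> simp at hj
    · obtain ⟨i, _, hi⟩ := Finset.prod_eq_zero_iff.1 h
      exact hne i (sub_eq_zero.1 hi)
  · intro s _ hs
    have hvs : v s ≠ x₀ := by
      intro h
      apply hs
      funext j
      have := congrFun h j
      simp only [s₀, ← this, v]
      cases s j <;> simp
    have h3 : ¬ ∀ i, ∑ j, a i j * v s j ≠ b i := by
      intro h
      refine hvs ((hcover _).1 ⟨fun j => ?_, h⟩)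
      simp only [v]
      cases s j <;> simp
    push Not at h3
    obtain ⟨i, hi⟩ := h3
    rw [Finset.prod_eq_zero (Finset.mem_univ i) (sub_eq_zero.2 hi), mul_zero]
  · intro h
    exact absurd (Finset.mem_univ _) h
end

section
/- Let G be a loopless directed multigraph with finite vertex set V, finite edge set E, and head and tail maps h, t : E → V with h(e) ≠ t(e) for all e. Let F be a field, and for each v ∈ V let X_v ⊆ F be a finite nonempty set with d_v := |X_v| − 1; suppose |E| ≤ Σ_{v∈V} d_v. Call a map σ : E → V with σ(e) ∈ {h(e), t(e)} for all e an orientation; it is a d-orientation if |σ^{−1}(v)| = d_v for all v ∈ V, and it is even (resp. odd) if the number of edges e with σ(e) = t(e) is even (resp. odd). Let DE_d and DO_d denote the sets of even and odd d-orientations. Then: (i) (|DE_d| − |DO_d|), cast into F, equals Σ_{x ∈ ∏_v X_v} N(x)^{−1} · ∏_{e ∈ E} ( x_{h(e)} − x_{t(e)} ), where N(x) := ∏_{v∈V} ∏_{x̂ ∈ X_v, x̂ ≠ x_v} (x_v − x̂); and (ii) if this element of F is nonzero, then there exists x ∈ ∏_v X_v with x_{h(e)} ≠ x_{t(e)} for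 every e ∈ E (a proper coloring from the lists X_v). -/
open Finset

theorem at_sum_pow {F : Type*} [Field F] [DecidableEq F] (S : Finset F) (hS : S.Nonempty)
    (k : ℕ) (hk : k ≤ S.card - 1) :
    ∑ z ∈ S, (∏ y ∈ S.erase z, (z - y))⁻¹ * z ^ k = if k = S.card - 1 then 1 else 0 := by
  have hc : 0 < S.card := hS.card_pos
  have hdeg : ((Polynomial.X : Polynomial F) ^ k).degree < (S.card : WithBot ℕ) := by
    rw [Polynomial.degree_X_pow]
    have : k < S.card := by omega
    exact_mod_cast this
  have key := Lagrange.coeff_eq_sum (s := S) (v := id) (Function.injective_id.injOn) hdeg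
  rw [Polynomial.coeff_X_pow] at key
  simp only [Polynomial.eval_pow, Polynomial.eval_X, id] at key
  rw [show (if k = S.card - 1 then (1 : F) else 0) = if S.card - 1 = k then 1 else 0 by
    simp only [eq_comm], key]
  exact Finset.sum_congr rfl fun z _ => by rw [div_eq_mul_inv, mul_comm]

theorem at_expand {V E : Type*} [Fintype V] [Fintype E] [DecidableEq V] [DecidableEq E]
    (h t : E → V) (hloop : ∀ e, h e ≠ t e) {F : Type*} [Field F] (x : V → F) :
    ∏ e, (x (h e) - x (t e)) =
      ∑ σ ∈ Finset.univ.filter (fun σ : E → V => ∀ e, σ e = h e ∨ σ e = t e),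
        (-1) ^ (Finset.univ.filter (fun e => σ e = t e)).card *
          ∏ v, x v ^ (Finset.univ.filter (fun e => σ e = v)).card := by
  have h1 : ∀ e, x (h e) - x (t e) =
      ∑ v ∈ ({h e, t e} : Finset V), (if v = t e then -1 else 1) * x v := by
    intro e
    rw [Finset.sum_pair (hloop e)]
    simp [hloop e, sub_eq_add_neg]
  simp_rw [h1]
  rw [Finset.prod_univ_sum]
  have h2 : Fintype.piFinset (fun e => ({h e, t e} : Finset V)) =
      Finset.univ.filter (fun σ : E → V => ∀ e, σ e = h e ∨ σ e = t e) := by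
    ext σ; simp
  rw [h2]
  refine Finset.sum_congr rfl fun σ _ => ?_
  rw [Finset.prod_mul_distrib, ← Finset.prod_fiberwise' Finset.univ σ x]
  congr 1
  · rw [Finset.prod_ite]; simp
  · simp

/-- Alon–Tarsi theorem for list colorings: (i) the difference between the numbers of
even and odd `d`-orientations, cast into `F`, equals
`∑_{x ∈ X} N(x)⁻¹ ∏_{e ∈ E} (x_{h(e)} − x_{t(e)})`; and (ii) if this element of `F` is
nonzero, there is a proper coloring from the lists. -/
theorem alon_tarsi {V E : Type*} [Fintype V] [Fintype E] [DecidableEq V] [DecidableEq E]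
    (h t : E → V) (hloop : ∀ e, h e ≠ t e)
    {F : Type*} [Field F] [DecidableEq F]
    (X : V → Finset F) (hX : ∀ v, (X v).Nonempty)
    (d : V → ℕ) (hd : ∀ v, d v = (X v).card - 1)
    (hE : Fintype.card E ≤ ∑ v, d v) :
    ((((Finset.univ.filter (fun σ : E → V =>
          (∀ e, σ e = h e ∨ σ e = t e)
          ∧ (∀ v, (Finset.univ.filter (fun e => σ e = v)).card = d v)
          ∧ Even (Finset.univ.filter (fun e => σ e = t e)).card)).card : ℤ)
      - ((Finset.univ.filter (fun σ : E → V =>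
          (∀ e, σ e = h e ∨ σ e = t e)
          ∧ (∀ v, (Finset.univ.filter (fun e => σ e = v)).card = d v)
          ∧ Odd (Finset.univ.filter (fun e => σ e = t e)).card)).card : ℤ) : ℤ) : F)
      = ∑ x ∈ Fintype.piFinset X,
          (∏ v, ∏ z ∈ (X v).erase (x v), (x v - z))⁻¹
            * ∏ e, (x (h e) - x (t e))
    ∧
    ((∑ x ∈ Fintype.piFinset X,
          (∏ v, ∏ z ∈ (X v).erase (x v), (x v - z))⁻¹
            * ∏ e, (x (h e) - x (t e))) ≠ 0 →
      ∃ x : V → F, (∀ v, x v ∈ X v) ∧ ∀ e, x (h e) ≠ x (t e)) := by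
  refine ⟨?_, ?_⟩
  · have hR : ∑ x ∈ Fintype.piFinset X, (∏ v, ∏ z ∈ (X v).erase (x v), (x v - z))⁻¹
            * ∏ e, (x (h e) - x (t e)) =
        ∑ σ ∈ Finset.univ.filter (fun σ : E → V => ∀ e, σ e = h e ∨ σ e = t e),
          (-1 : F) ^ (Finset.univ.filter (fun e => σ e = t e)).card *
            (if ∀ v, (Finset.univ.filter (fun e => σ e = v)).card = d v then 1 else 0) := by
      simp_rw [at_expand h t hloop, Finset.mul_sum]
      rw [Finset.sum_comm]
      refine Finset.sum_congr rfl fun σ _ => ?_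
      simp_rw [mul_left_comm _ ((-1 : F) ^ _)]
      rw [← Finset.mul_sum]
      congr 1
      simp_rw [← Finset.prod_inv_distrib, ← Finset.prod_mul_distrib]
      rw [← Finset.prod_univ_sum X (fun v z => (∏ y ∈ (X v).erase z, (z - y)⁻¹) *
        z ^ (Finset.univ.filter (fun e => σ e = v)).card)]
      simp_rw [Finset.prod_inv_distrib]
      split_ifs with hc
      · refine Finset.prod_eq_one fun v _ => ?_
        rw [at_sum_pow (X v) (hX v) _ (by rw [hc v, hd v]), if_pos (by rw [hc v, hd v])]
      · have hsum : ∑ v, (Finset.univ.filter (fun e => σ e = v)).card = Fintype.card E := by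
          rw [← Finset.card_univ]
          exact (Finset.card_eq_sum_card_fiberwise (fun _ _ => Finset.mem_univ _)).symm
        have hlt : ∃ v, (Finset.univ.filter (fun e => σ e = v)).card < d v := by
          by_contra! hcon
          apply hc
          have := (Finset.sum_eq_sum_iff_of_le (fun v (_ : v ∈ Finset.univ) => hcon v)).1
            (le_antisymm (Finset.sum_le_sum fun v _ => hcon v) (hsum ▸ hE))
          exact fun v => (this v (Finset.mem_univ v)).symm
        obtain ⟨v, hv⟩ := hlt
        rw [hd v] at hv
        refine Finset.prod_eq_zero (Finset.mem_univ v) ?_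
        rw [at_sum_pow (X v) (hX v) _ hv.le, if_neg hv.ne]
    rw [hR]
    push_cast
    rw [Finset.card_filter, Finset.card_filter, Finset.sum_filter]
    push_cast
    rw [← Finset.sum_sub_distrib]
    refine Finset.sum_congr rfl fun σ _ => ?_
    by_cases ha : ∀ e, σ e = h e ∨ σ e = t e <;>
    by_cases hb : ∀ v, (Finset.univ.filter (fun e => σ e = v)).card = d v
    · rcases Nat.even_or_odd (Finset.univ.filter (fun e => σ e = t e)).card with hp | hp
      · rw [if_pos ⟨ha, hb, hp⟩, if_neg (fun q => Nat.not_odd_iff_even.2 hp q.2.2), if_pos ha,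
          if_pos hb, hp.neg_one_pow]
        simp
      · rw [if_neg (fun q => Nat.not_even_iff_odd.2 hp q.2.2), if_pos ⟨ha, hb, hp⟩, if_pos ha,
          if_pos hb, hp.neg_one_pow]
        simp
    · rw [if_neg (fun q => hb q.2.1), if_neg (fun q => hb q.2.1), if_pos ha, if_neg hb]
      simp
    · rw [if_neg (fun q => ha q.1), if_neg (fun q => ha q.1), if_neg ha]
      simp
    · rw [if_neg (fun q => ha q.1), if_neg (fun q => ha q.1), if_neg ha]
      simp
  · intro hne
    obtain ⟨x, hx, hx0⟩ := Finset.exists_ne_zero_of_sum_ne_zero hne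
    refine ⟨x, fun v => Fintype.mem_piFinset.1 hx v, fun e he => hx0 ?_⟩
    rw [Finset.prod_eq_zero (Finset.mem_univ e) (sub_eq_zero.2 he), mul_zero]
end

section
/- Let R be a commutative ring with 1 ≠ 0 and X = X_1 × ⋯ × X_n an integral grid (for all j, differences of distinct elements of X_j are non-zero-divisors; e.g. R an integral domain), and set L_j := ∏_{x̂ ∈ X_j} (X_j − x̂) ∈ R[X_1,…,X_n]. Then for any P ∈ R[X_1,…,X_n] the following are equivalent: (i) P(x) = 0 for all x ∈ X; (ii) there exist polynomials H_1,…,H_n ∈ R[X_1,…,X_n] with deg(H_j) ≤ deg(P) − |X_j| for each j such that P = Σ_{j=1}^n H_j · L_j. -/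
open MvPolynomial Finset

/-- A univariate polynomial of small degree vanishing on an integral set is zero. -/
theorem grid_univ {R : Type*} [CommRing R] (S : Finset R)
    (hS : ∀ x ∈ S, ∀ w ∈ S, x ≠ w → x - w ∈ nonZeroDivisors R) {f : Polynomial R}
    (hf : ∀ x ∈ S, f.eval x = 0) (hd : f.natDegree < S.card) : f = 0 := by
  classical
  induction S using Finset.induction_on generalizing f with
  | empty => simp at hd
  | insert a S ha ih =>
    have hroot : f.IsRoot a := hf a (by simp)
    obtain ⟨g, rfl⟩ := Polynomial.dvd_iff_isRoot.mpr hroot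
    by_contra hne
    have hg0 : g ≠ 0 := by
      rintro rfl
      simp at hne
    have : Nontrivial R := Polynomial.nontrivial_iff.mp ⟨g, 0, hg0⟩
    rw [(Polynomial.monic_X_sub_C a).natDegree_mul' hg0, Polynomial.natDegree_X_sub_C,
      Finset.card_insert_of_notMem ha] at hd
    apply hg0
    apply ih
    · intro x hx w hw
      exact hS x (by simp [hx]) w (by simp [hw])
    · intro x hx
      have h1 := hf x (by simp [hx])
      rw [Polynomial.eval_mul, Polynomial.eval_sub, Polynomial.eval_X, Polynomial.eval_C] at h1
      have hxa : x ≠ a := by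
        rintro rfl
        exact ha hx
      have h2 := hS x (by simp [hx]) a (by simp) hxa
      exact (mul_left_mem_nonZeroDivisors_eq_zero_iff h2).mp h1
    · omega

section
open Finsupp Function

/-- A multivariate polynomial of small degrees vanishing on an integral grid is zero. -/
theorem grid_multi {R : Type*} [CommRing R] {σ : Type*} [Finite σ]
    (P : MvPolynomial σ R) (S : σ → Finset R)
    (hS : ∀ i, ∀ x ∈ S i, ∀ w ∈ S i, x ≠ w → x - w ∈ nonZeroDivisors R)
    (Hdeg : ∀ i, P.degreeOf i < (S i).card)
    (Heval : ∀ (x : σ → R), (∀ i, x i ∈ S i) → eval x P = 0) :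
    P = 0 := by
  induction σ using Finite.induction_empty_option with
  | @of_equiv σ τ e h =>
    suffices MvPolynomial.rename e.symm P = 0 by
      have that := MvPolynomial.rename_injective (R := R) e.symm (e.symm.injective)
      rw [RingHom.injective_iff_ker_eq_bot] at that
      rwa [← RingHom.mem_ker, that] at this
    apply h _ (fun i ↦ S (e i)) (fun i ↦ hS (e i))
    · intro i
      convert! Hdeg (e i)
      conv_lhs => rw [← e.symm_apply_apply i, degreeOf_rename_of_injective e.symm.injective]
    · intro x hx
      simp only [MvPolynomial.eval_rename]
      apply Heval
      intro s
      simp only [Function.comp_apply]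
      convert! hx (e.symm s)
      simp only [Equiv.apply_symm_apply]
  | h_empty =>
    suffices P = C (constantCoeff P) by
      specialize Heval default (fun i ↦ PEmpty.elim i)
      rw [this, eval_C] at Heval
      rw [this, Heval, C_0]
    ext m
    suffices m = 0 by simp [this, ← constantCoeff_eq]
    ext d; exact PEmpty.elim d
  | @h_option σ _ h =>
    set Q := optionEquivLeft R σ P with hQ
    suffices Q = 0 by
      rw [← AlgEquiv.symm_apply_apply (optionEquivLeft R σ) P, ← hQ, this, map_zero]
    have Heval' (x : σ → R) (hx : ∀ i, x i ∈ S (some i)) : Polynomial.map (eval x) Q = 0 := by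
      apply grid_univ (S none) (hS none)
      · intro y hy
        rw [← optionEquivLeft_elim_eval]
        apply Heval
        simp only [Option.forall, Option.elim_none, hy, Option.elim_some, hx, implies_true,
          and_self]
      · apply lt_of_le_of_lt _ (Hdeg none)
        rw [Polynomial.natDegree_le_iff_coeff_eq_zero]
        intro d hd
        simp only [hQ]
        rw [MvPolynomial.coeff_eval_eq_eval_coeff]
        convert! map_zero (MvPolynomial.eval x)
        ext m
        simp only [coeff_zero]
        set n := (embDomain Function.Embedding.some m).update none d with hn
        rw [eq_option_embedding_update_none_iff] at hn
        rw [← hn.1, ← hn.2, optionEquivLeft_coeff_some_coeff_none]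
        by_contra hm
        apply not_le.mpr hd
        rw [MvPolynomial.degreeOf_eq_sup]
        rw [← ne_eq, ← MvPolynomial.mem_support_iff] at hm
        convert! Finset.le_sup hm
        exact hn.1.symm
    ext m d
    simp only [Polynomial.coeff_zero, coeff_zero]
    suffices Q.coeff m = 0 by simp only [this, coeff_zero]
    apply h _ (fun i ↦ S (some i)) (fun i ↦ hS (some i))
    · intro i
      apply lt_of_le_of_lt _ (Hdeg (some i))
      simp only [degreeOf_eq_sup, Finset.sup_le_iff, MvPolynomial.mem_support_iff, ne_eq]
      intro e he
      set n := (embDomain Function.Embedding.some e).update none m with hn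
      rw [eq_option_embedding_update_none_iff] at hn
      rw [hQ, ← hn.1, ← hn.2, optionEquivLeft_coeff_some_coeff_none, ← ne_eq,
        ← MvPolynomial.mem_support_iff] at he
      convert! Finset.le_sup he
      rw [← hn.2, some_apply]
    · intro x hx
      specialize Heval' x hx
      rw [Polynomial.ext_iff] at Heval'
      simpa only [Polynomial.coeff_map, Polynomial.coeff_zero] using Heval' m

end

open MonomialOrder in
theorem grid_degree {R : Type*} [CommRing R] {σ : Type*} [Nontrivial R] (m : MonomialOrder σ)
    (S : Finset R) (i : σ) :
    m.degree (∏ r ∈ S, (MvPolynomial.X i - MvPolynomial.C r)) = Finsupp.single i S.card := by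
  rw [degree_prod_of_regular]
  · simp [Finset.sum_congr rfl (fun r _ ↦ m.degree_X_sub_C i r)]
  · intro r _
    rw [m.monic_X_sub_C]
    exact isRegular_one

theorem grid_monic {R : Type*} [CommRing R] {σ : Type*} (m : MonomialOrder σ)
    (S : Finset R) (i : σ) :
    m.Monic (∏ r ∈ S, (MvPolynomial.X i - MvPolynomial.C r) : MvPolynomial σ R) :=
  MonomialOrder.Monic.prod (fun r _ ↦ m.monic_X_sub_C i r)

/-- Combinatorial Nullstellensatz: over an integral grid, `P` vanishes on the whole grid
iff `P = ∑_j H_j L_j` with `deg(H_j) ≤ deg(P) − |X_j|`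
(where `L_j = ∏_{z ∈ X_j}(X_j − z)`). -/
theorem combinatorial_nullstellensatz {R : Type*} [CommRing R] [Nontrivial R] {n : ℕ}
    (X : Fin n → Finset R) (hX : ∀ j, (X j).Nonempty)
    (hint : ∀ j, ∀ x ∈ X j, ∀ w ∈ X j, x ≠ w → x - w ∈ nonZeroDivisors R)
    (P : MvPolynomial (Fin n) R) :
    (∀ x : Fin n → R, (∀ j, x j ∈ X j) → MvPolynomial.eval x P = 0)
    ↔ ∃ H : Fin n → MvPolynomial (Fin n) R,
        (∀ j, H j = 0 ∨ (H j).totalDegree + (X j).card ≤ P.totalDegree)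
        ∧ P = ∑ j, H j * ∏ z ∈ X j, (MvPolynomial.X j - MvPolynomial.C z) := by
  have hL : ∀ (H : Fin n → MvPolynomial (Fin n) R) (x : Fin n → R), (∀ j, x j ∈ X j) →
      MvPolynomial.eval x
        (∑ j, H j * ∏ z ∈ X j, (MvPolynomial.X j - MvPolynomial.C z)) = 0 := by
    intro H x hx
    rw [map_sum]
    refine Finset.sum_eq_zero fun j _ ↦ ?_
    rw [map_mul, map_prod, Finset.prod_eq_zero (hx j) (by simp), mul_zero]
  constructor
  · intro Heval
    obtain ⟨h, r, hf, hh, hr⟩ := MonomialOrder.degLex.div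
      (b := fun i : Fin n ↦ ∏ z ∈ X i, (MvPolynomial.X i - MvPolynomial.C z))
      (fun i ↦ by simp only [(grid_monic ..).leadingCoeff_eq_one, isUnit_one]) P
    have hsum : Finsupp.linearCombination (MvPolynomial (Fin n) R)
        (fun i : Fin n ↦ ∏ z ∈ X i, (MvPolynomial.X i - MvPolynomial.C z)) h
        = ∑ j, h j * ∏ z ∈ X j, (MvPolynomial.X j - MvPolynomial.C z) := by
      rw [Finsupp.linearCombination_apply, Finsupp.sum_fintype _ _ (by simp)]
      simp
    rw [hsum] at hf
    have hr0 : r = 0 := by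
      apply grid_multi r X hint
      · intro i
        rw [degreeOf_eq_sup, Finset.sup_lt_iff (by simp [hX i])]
        intro c hc
        have := hr c hc i
        rw [grid_degree] at this
        simpa using this
      · intro x hx
        have h1 := Heval x hx
        rw [hf, map_add, hL h x hx, zero_add] at h1
        exact h1
    rw [hr0, add_zero] at hf
    refine ⟨h, fun j ↦ ?_, hf⟩
    by_cases hj : h j = 0
    · exact Or.inl hj
    · right
      have h1 := MvPolynomial.degLex_totalDegree_monotone (hh j)
      rw [mul_comm, ← degree_degLexDegree,
        MonomialOrder.degree_mul_of_isRegular_right hj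
          (by simp only [(grid_monic ..).leadingCoeff_eq_one, isRegular_one]),
        grid_degree, map_add, degree_degLexDegree, Finsupp.degree_single] at h1
      exact h1
  · rintro ⟨H, -, hP⟩ x hx
    rw [hP]
    exact hL H x hx
end

section
/- Let P ∈ ℤ[X_1,…,X_n], let d_1,…,d_n ∈ ℕ, and set X := {0,…,d_1} × ⋯ × {0,…,d_n} ⊆ ℤ^n. If deg(P) ≤ d_1 + ⋯ + d_n, then (−1)^{d_1+⋯+d_n} · (∏_{j=1}^n d_j!) · P_d = Σ_{x ∈ X} ( ∏_{j=1}^n (−1)^{x_j} · C(d_j, x_j) ) · P(x), where P_d denotes the coefficient of X_1^{d_1}⋯X_n^{d_n} in P and C(d, x) is the binomial coefficient. -/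
open MvPolynomial Finset

lemma altsum_eq_fwdDiff (d e : ℕ) :
    ∑ k ∈ range (d + 1), ((-1) ^ k * (d.choose k : ℤ)) * (k : ℤ) ^ e
      = (-1) ^ d * ((fwdDiff (1 : ℤ))^[d] (fun x : ℤ => x ^ e) 0) := by
  rw [fwdDiff_iter_eq_sum_shift, Finset.mul_sum]
  refine Finset.sum_congr rfl fun k hk => ?_
  have hk' : k ≤ d := by have := Finset.mem_range.1 hk; omega
  obtain ⟨r, rfl⟩ := Nat.exists_eq_add_of_le hk'
  have h1 : ((-1 : ℤ)) ^ (k + r) * (-1) ^ r = (-1) ^ k := by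
    rw [pow_add, mul_assoc, ← mul_pow]; simp
  simp only [Nat.add_sub_cancel_left, smul_eq_mul, zero_add, nsmul_eq_mul, mul_one]
  rw [← h1]; ring

lemma altsum_lt {d e : ℕ} (h : e < d) :
    ∑ k ∈ range (d + 1), ((-1) ^ k * (d.choose k : ℤ)) * (k : ℤ) ^ e = 0 := by
  rw [altsum_eq_fwdDiff, fwdDiff_iter_pow_eq_zero_of_lt h]; simp

lemma altsum_self (d : ℕ) :
    ∑ k ∈ range (d + 1), ((-1) ^ k * (d.choose k : ℤ)) * (k : ℤ) ^ d
      = (-1) ^ d * (d.factorial : ℤ) := by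
  rw [altsum_eq_fwdDiff, fwdDiff_iter_eq_factorial]; simp

/-- Coefficient formula over `ℤ` on the grid `{0,…,d_1} × ⋯ × {0,…,d_n}`:
`(−1)^{Σd} (∏ d_j!) P_d = ∑_x (∏_j (−1)^{x_j} C(d_j, x_j)) P(x)`. -/
theorem coeff_formula_int {n : ℕ} (P : MvPolynomial (Fin n) ℤ) (d : Fin n → ℕ)
    (hdeg : P.totalDegree ≤ ∑ j, d j) :
    (-1) ^ (∑ j, d j) * (∏ j, ((d j).factorial : ℤ))
        * MvPolynomial.coeff (Finsupp.equivFunOnFinite.symm d) P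
      = ∑ x ∈ Fintype.piFinset (fun j => Finset.range (d j + 1)),
          (∏ j, (-1) ^ (x j) * ((d j).choose (x j) : ℤ))
          * MvPolynomial.eval (fun j => ((x j : ℕ) : ℤ)) P := by
  have key : ∑ x ∈ Fintype.piFinset (fun j => Finset.range (d j + 1)),
          (∏ j, (-1) ^ (x j) * ((d j).choose (x j) : ℤ))
          * MvPolynomial.eval (fun j => ((x j : ℕ) : ℤ)) P
      = ∑ m ∈ P.support, P.coeff m * ∏ j, ∑ k ∈ range (d j + 1),
          ((-1) ^ k * ((d j).choose k : ℤ)) * (k : ℤ) ^ (m j) := by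
    simp_rw [MvPolynomial.eval_eq', Finset.mul_sum]
    rw [Finset.sum_comm]
    refine Finset.sum_congr rfl fun m _ => ?_
    rw [Finset.prod_univ_sum, Finset.mul_sum]
    refine Finset.sum_congr rfl fun x _ => ?_
    rw [Finset.prod_mul_distrib (f := fun j => (-1) ^ (x j) * ((d j).choose (x j) : ℤ))]
    ring
  rw [key, Finset.sum_eq_single (Finsupp.equivFunOnFinite.symm d)]
  · simp only [Finsupp.equivFunOnFinite_symm_apply_apply, altsum_self, Finset.prod_mul_distrib,
      Finset.prod_pow_eq_pow_sum]
    ring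
  · intro m hm hne
    have hle : ∑ j, m j ≤ ∑ j, d j := by
      have := MvPolynomial.le_totalDegree hm
      rw [Finsupp.sum_fintype _ _ (fun _ => rfl)] at this
      exact this.trans hdeg
    have hex : ∃ j, m j < d j := by
      by_contra! hcon
      apply hne
      have h2 := (Finset.sum_eq_sum_iff_of_le (fun j _ => hcon j)).1
        (le_antisymm (Finset.sum_le_sum fun j _ => hcon j) hle)
      ext j
      exact (h2 j (Finset.mem_univ j)).symm
    obtain ⟨j, hj⟩ := hex
    rw [Finset.prod_eq_zero (Finset.mem_univ j) (altsum_lt hj), mul_zero]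
  · intro h
    rw [MvPolynomial.notMem_support_iff.1 h, zero_mul]
end

section
/- Let m ≥ 2 be a composite natural number (not prime), n ≥ 1, and assume (m, n) ≠ (4, 1). Then for every polynomial P ∈ (ℤ/mℤ)[X_1,…,X_n], the number of points x ∈ (ℤ/mℤ)^n with P(x) ≠ 0 is not equal to 1. -/
open MvPolynomial

/-- Second-order Taylor expansion, with unspecified remainder. -/
lemma taylor_aux {R : Type*} [CommRing R] {n : ℕ} (a : Fin n → R)
    (P : MvPolynomial (Fin n) R) :
    ∃ D : Fin n → R, ∀ (t : R) (y : Fin n → R), ∃ C : R,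
      eval (fun i => a i + t * y i) P = eval a P + t * (∑ i, y i * D i) + t ^ 2 * C := by
  induction P using MvPolynomial.induction_on with
  | C c => exact ⟨0, fun t y => ⟨0, by simp⟩⟩
  | add p q hp hq =>
    obtain ⟨D, hD⟩ := hp
    obtain ⟨E, hE⟩ := hq
    refine ⟨D + E, fun t y => ?_⟩
    obtain ⟨A, hA⟩ := hD t y
    obtain ⟨B, hB⟩ := hE t y
    refine ⟨A + B, ?_⟩
    simp only [map_add, hA, hB, Pi.add_apply, mul_add, Finset.sum_add_distrib]
    ring
  | mul_X p j hp =>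
    obtain ⟨D, hD⟩ := hp
    refine ⟨fun i => D i * a j + (if i = j then eval a p else 0), fun t y => ?_⟩
    obtain ⟨A, hA⟩ := hD t y
    refine ⟨A * a j + (∑ i, y i * D i) * y j + t * A * y j, ?_⟩
    have h : ∑ i, y i * (D i * a j + (if i = j then eval a p else 0))
        = (∑ i, y i * D i) * a j + y j * eval a p := by
      simp only [mul_add, Finset.sum_add_distrib, mul_ite, mul_zero, Finset.sum_ite_eq',
        Finset.mem_univ, if_true, Finset.sum_mul, mul_assoc]
    rw [h]
    simp only [map_mul, eval_X, hA]
    ring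

/-- Over `ℤ/mℤ` with `m` composite and `(m,n) ≠ (4,1)`, no polynomial has exactly one
nonvanishing point in `(ℤ/mℤ)^n`. -/
theorem zmod_not_exactly_one_nonzero (m n : ℕ) (hm : 2 ≤ m) (hcomp : ¬ m.Prime)
    (hn : 1 ≤ n) (hmn : (m, n) ≠ (4, 1))
    (P : MvPolynomial (Fin n) (ZMod m)) :
    {x : Fin n → ZMod m | MvPolynomial.eval x P ≠ 0}.ncard ≠ 1 := by
  intro hcard
  obtain ⟨a, ha⟩ := Set.ncard_eq_one.1 hcard
  have hc : eval a P ≠ 0 := by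
    have : a ∈ {x : Fin n → ZMod m | MvPolynomial.eval x P ≠ 0} := by rw [ha]; rfl
    exact this
  have hz : ∀ x, x ≠ a → eval x P = 0 := by
    intro x hx
    by_contra h
    have : x ∈ {x : Fin n → ZMod m | MvPolynomial.eval x P ≠ 0} := h
    rw [ha] at this
    exact hx this
  obtain ⟨D, hD⟩ := taylor_aux a P
  generalize eval a P = c at hc hD
  have H : ∀ (t : ZMod m) (y : Fin n → ZMod m) (i : Fin n), y i = 1 → t ≠ 0 →
      ∃ C, c + t * (∑ i, y i * D i) + t ^ 2 * C = 0 := by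
    intro t y i hy ht
    obtain ⟨C, hC⟩ := hD t y
    refine ⟨C, ?_⟩
    rw [← hC]
    apply hz
    intro h
    have := congrFun h i
    simp [hy, ht] at this
  have H1 : ∀ (i : Fin n) (t : ZMod m), t ≠ 0 → ∃ C, c + t * D i + t ^ 2 * C = 0 := by
    intro i t ht
    obtain ⟨C, hC⟩ := H t (Pi.single i 1) i (by simp) ht
    refine ⟨C, ?_⟩
    simpa [Pi.single_apply] using hC
  have H2 : ∀ (i j : Fin n) (t : ZMod m), i ≠ j → t ≠ 0 →
      ∃ C, c + t * (D i + D j) + t ^ 2 * C = 0 := by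
    intro i j t hij ht
    obtain ⟨C, hC⟩ := H t (Pi.single i 1 + Pi.single j 1) i (by simp [hij]) ht
    refine ⟨C, ?_⟩
    simpa [Pi.single_apply, add_mul, Finset.sum_add_distrib] using hC
  have hnz : ∀ k : ℕ, 0 < k → k < m → (k : ZMod m) ≠ 0 := by
    intro k h0 hk h
    rw [ZMod.natCast_eq_zero_iff] at h
    exact absurd (Nat.le_of_dvd h0 h) (by omega)
  have hm0 : (m : ZMod m) = 0 := ZMod.natCast_self m
  let i0 : Fin n := ⟨0, hn⟩
  apply hc
  by_cases hodd : ∃ p, p.Prime ∧ p ∣ m ∧ Odd p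
  · obtain ⟨p, hp, ⟨q, rfl⟩, hpo⟩ := hodd
    have hp3 : 3 ≤ p := by
      have := hp.two_le
      rcases hpo with ⟨k, rfl⟩
      omega
    have hq0 : q ≠ 0 := by rintro rfl; simp at hm
    have hq1 : q ≠ 1 := by rintro rfl; simp at hcomp; exact hcomp hp
    have hq2 : 2 ≤ q := by omega
    have hqne := hnz q (by omega) (by nlinarith)
    push_cast at hm0
    by_cases hd : p ∣ q
    · have h2q := hnz (2 * q) (by omega) (by nlinarith)
      have hsq : (q : ZMod (p * q)) ^ 2 = 0 := by
        obtain ⟨r, hr⟩ := hd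
        have : (q : ZMod (p * q)) = p * r := by rw [← Nat.cast_mul, ← hr]
        calc (q : ZMod (p * q)) ^ 2 = q * q := by ring
          _ = p * r * q := by rw [← this]
          _ = r * (p * q) := by ring
          _ = 0 := by rw [hm0, mul_zero]
      obtain ⟨A, hA⟩ := H1 i0 _ hqne
      obtain ⟨B, hB⟩ := H1 i0 _ h2q
      push_cast at hB
      linear_combination 2 * hA - hB + (4 * B - 2 * A) * hsq
    · have hcop : IsCoprime (p : ℤ) (q : ℤ) :=
        Nat.isCoprime_iff_coprime.2 ((Nat.Prime.coprime_iff_not_dvd hp).2 hd)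
      obtain ⟨u, v, huv⟩ := hcop
      have huv' := congrArg (Int.cast : ℤ → ZMod (p * q)) huv
      push_cast at huv'
      have hpne := hnz p (by omega) (by nlinarith)
      obtain ⟨A, hA⟩ := H1 i0 _ hqne
      obtain ⟨B, hB⟩ := H1 i0 _ hpne
      linear_combination (-c) * huv' + (u * p : ZMod (p * q)) * hA + (v * q : ZMod (p * q)) * hB
        - (u * (D i0 + q * A) + v * (D i0 + p * B)) * hm0
  · have hpow : ∃ k, m = 2 ^ k := by
      refine ⟨_, Nat.eq_prime_pow_of_unique_prime_dvd (p := 2) (by omega) ?_⟩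
      intro d hd hdm
      rcases hd.eq_two_or_odd' with h | h
      · exact h
      · exact absurd ⟨d, hd, hdm, h⟩ hodd
    obtain ⟨k, hk⟩ := hpow
    have hk2 : 2 ≤ k := by
      by_contra h
      interval_cases k
      · omega
      · rw [hk] at hcomp; exact hcomp (by norm_num)
    obtain ⟨l, rfl⟩ := Nat.exists_eq_add_of_le hk2
    by_cases hn2 : 2 ≤ n
    · let i1 : Fin n := ⟨1, hn2⟩
      have hne : i0 ≠ i1 := by simp [i0, i1]
      obtain ⟨r, hr⟩ : ∃ r, r = 2 ^ l := ⟨_, rfl⟩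
      have hr0 : 0 < r := by rw [hr]; positivity
      have hmr : m = 4 * r := by rw [hk, hr]; ring
      have h4 : (4 * r : ZMod m) = 0 := by
        have h := congrArg (Nat.cast : ℕ → ZMod m) hmr
        push_cast at h
        rw [← h, hm0]
      have ht := hnz (2 * r) (by omega) (by omega)
      obtain ⟨A, hA⟩ := H1 i0 _ ht
      obtain ⟨B, hB⟩ := H1 i1 _ ht
      obtain ⟨C, hC⟩ := H2 i0 i1 _ hne ht
      push_cast at hA hB hC
      linear_combination hA + hB - hC - r * (A + B - C) * h4
    · have hn1 : n = 1 := by omega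
      have hl : l ≠ 0 := by
        rintro rfl
        apply hmn
        rw [hk, hn1]
        norm_num
      obtain ⟨s, rfl⟩ := Nat.exists_eq_succ_of_ne_zero hl
      obtain ⟨w, hw⟩ : ∃ w, w = 2 ^ s := ⟨_, rfl⟩
      have hw0 : 0 < w := by rw [hw]; positivity
      have hmr : m = 8 * w := by rw [hk, hw, Nat.succ_eq_add_one]; ring
      have h8 : (8 * w : ZMod m) = 0 := by
        have h := congrArg (Nat.cast : ℕ → ZMod m) hmr
        push_cast at h
        rw [← h, hm0]
      obtain ⟨A, hA⟩ := H1 i0 _ (hnz (4 * w) (by omega) (by omega))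
      obtain ⟨B, hB⟩ := H1 i0 _ (hnz (2 * w) (by omega) (by omega))
      push_cast at hA hB
      have h1 : (2 * w : ZMod m) * (D i0 - 2 * w * B) = 0 := by
        linear_combination hA - hB - 2 * w * A * h8
      obtain ⟨z, hz'⟩ := ZMod.intCast_surjective (D i0 - 2 * (w : ZMod m) * B)
      have h2 : (m : ℤ) ∣ 2 * w * z := by
        rw [← ZMod.intCast_zmod_eq_zero_iff_dvd _ m] <;> try exact ⟨by omega⟩
        push_cast
        rw [hz', h1]
      have h3 : (4 : ℤ) ∣ z := by
        rw [hmr] at h2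
        push_cast at h2
        have : (2 * w : ℤ) * 4 ∣ 2 * w * z := by convert h2 using 1; ring
        exact Int.dvd_of_mul_dvd_mul_left (by positivity) this
      obtain ⟨e, rfl⟩ := h3
      push_cast at hz'
      linear_combination hA - 2 * w * A * h8 + 4 * w * hz' - (2 * e + w * B) * h8
end

section
/- Let p be a prime, k > 0 a natural number, and set c := Σ_{i=0}^{k−1} (p^i − 1). Then for every integer y: (i) p^c divides ∏_{ŷ=1}^{p^k − 1} (y − ŷ); and (ii) p^{c+1} does not divide ∏_{ŷ=1}^{p^k − 1} (y − ŷ) if and only if p^k divides y. -/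
open Finset

lemma aux_fact (p k : ℕ) (hp : p.Prime) (hk : 0 < k) :
    emultiplicity (p : ℤ) ((p ^ k - 1).factorial : ℤ)
      = ((∑ i ∈ Finset.range k, (p ^ i - 1) : ℕ) : ℕ∞) := by
  rw [Int.natCast_emultiplicity]
  have hpk : 0 < p ^ k := pow_pos hp.pos k
  rw [hp.emultiplicity_factorial (b := k)]
  · congr 1
    obtain ⟨m, rfl⟩ : ∃ m, k = m + 1 := ⟨k - 1, by omega⟩
    rw [Finset.sum_range_succ', Finset.sum_Ico_eq_sum_range]
    simp only [Nat.add_sub_cancel, pow_zero, Nat.sub_self, add_zero]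
    rw [← Finset.sum_range_reflect]
    apply Finset.sum_congr rfl
    intro j hj
    have hj' : j < m := Finset.mem_range.1 hj
    have h1 : p ^ (m + 1) = p ^ (j + 1) * p ^ (1 + (m - 1 - j)) := by
      rw [← pow_add]; congr 1; omega
    have hA : 0 < p ^ (j + 1) := pow_pos hp.pos _
    have hB : 0 < p ^ (1 + (m - 1 - j)) := pow_pos hp.pos _
    rw [h1]
    generalize p ^ (j + 1) = A at *
    generalize p ^ (1 + (m - 1 - j)) = B at *
    obtain ⟨a, rfl⟩ : ∃ a, A = a + 1 := ⟨A - 1, by omega⟩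
    rw [Nat.div_eq_iff hB]
    obtain ⟨b, rfl⟩ : ∃ b, B = b + 1 := ⟨B - 1, by omega⟩
    simp only [Nat.add_sub_cancel]
    have : (a + 1) * (b + 1) = a * (b + 1) + b + 1 := by ring
    omega
  · exact Nat.log_lt_of_lt_pow' (by omega) (by omega)

lemma aux_prod (y : ℤ) (n : ℕ) :
    ∏ z ∈ Finset.range n, (y - (z : ℤ)) = (n.factorial : ℤ) * Ring.choose y n := by
  have h := Ring.descPochhammer_eq_factorial_smul_choose y n
  rw [← Polynomial.eval_eq_smeval, descPochhammer_eval_eq_prod_range] at h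
  rw [h, nsmul_eq_mul]

/-- For prime `p`, `k > 0` and `c = Σ_{i<k}(p^i − 1)`: (i) `p^c` divides
`∏_{0<z<p^k}(y − z)`, and (ii) `p^{c+1}` fails to divide this product iff `p^k ∣ y`. -/
theorem pow_dvd_prod_sub (p k : ℕ) (hp : p.Prime) (hk : 0 < k) (y : ℤ) :
    ((p : ℤ) ^ (∑ i ∈ Finset.range k, (p ^ i - 1)) ∣
        ∏ z ∈ Finset.Ico 1 (p ^ k), (y - (z : ℤ)))
    ∧
    (¬ ((p : ℤ) ^ ((∑ i ∈ Finset.range k, (p ^ i - 1)) + 1) ∣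
        ∏ z ∈ Finset.Ico 1 (p ^ k), (y - (z : ℤ)))
      ↔ (p : ℤ) ^ k ∣ y) := by
  have hpp : Prime (p : ℤ) := Nat.prime_iff_prime_int.1 hp
  have hF := aux_fact p k hp hk
  have hpk : 0 < p ^ k := pow_pos hp.pos k
  obtain ⟨n, hn⟩ : ∃ n, p ^ k = n + 1 := ⟨p ^ k - 1, by omega⟩
  have hP : ∏ z ∈ Finset.Ico 1 (p ^ k), (y - (z : ℤ))
      = (n.factorial : ℤ) * Ring.choose (y - 1) n := by
    rw [← aux_prod, hn, Finset.prod_Ico_eq_prod_range]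
    apply Finset.prod_congr rfl
    intros; push_cast; ring
  have hQ : y * ∏ z ∈ Finset.Ico 1 (p ^ k), (y - (z : ℤ))
      = ((n + 1).factorial : ℤ) * Ring.choose y (n + 1) := by
    rw [← aux_prod, hn, Finset.range_eq_Ico,
      Finset.prod_eq_prod_Ico_succ_bot (a := 0) (b := n + 1) (by omega)]
    simp
  have hn' : p ^ k - 1 = n := by omega
  rw [hn'] at hF
  generalize (∑ i ∈ Finset.range k, (p ^ i - 1)) = c at *
  have hd : (p : ℤ) ^ c ∣ (n.factorial : ℤ) := pow_dvd_of_le_emultiplicity hF.ge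
  refine ⟨hP ▸ hd.mul_right _, ?_, ?_⟩
  · intro h
    have h1 : ¬ (p : ℤ) ∣ Ring.choose (y - 1) n := by
      intro h2
      apply h
      rw [hP, pow_succ]
      exact mul_dvd_mul hd h2
    have h3 : y * Ring.choose (y - 1) n = (p : ℤ) ^ k * Ring.choose y (n + 1) := by
      have hf : (n.factorial : ℤ) ≠ 0 := by exact_mod_cast n.factorial_ne_zero
      apply mul_left_cancel₀ hf
      have : ((p : ℤ) ^ k) = n + 1 := by exact_mod_cast hn
      rw [hP, Nat.factorial_succ] at hQ
      rw [this]
      push_cast at hQ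
      linear_combination hQ
    exact hpp.pow_dvd_of_dvd_mul_right k h1 ⟨_, h3⟩
  · intro hy
    have key : emultiplicity (p : ℤ) (∏ z ∈ Finset.Ico 1 (p ^ k), (y - (z : ℤ)))
        = emultiplicity (p : ℤ) (n.factorial : ℤ) := by
      have : (n.factorial : ℤ) = ∏ z ∈ Finset.Ico 1 (p ^ k), (z : ℤ) := by
        rw [hn, ← Finset.prod_Ico_id_eq_factorial]; push_cast; rfl
      rw [this, Finset.emultiplicity_prod hpp, Finset.emultiplicity_prod hpp]
      apply Finset.sum_congr rfl
      intro z hz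
      rw [Finset.mem_Ico] at hz
      rw [emultiplicity_eq_emultiplicity_iff]
      intro m
      have hz' : ¬ (p : ℤ) ^ k ∣ (z : ℤ) := by
        intro h
        have h' : p ^ k ∣ z := by exact_mod_cast h
        have := Nat.le_of_dvd (by omega) h'
        omega
      rcases le_total m k with hm | hm
      · exact dvd_sub_right ((pow_dvd_pow _ hm).trans hy)
      · have e := pow_dvd_pow (p : ℤ) hm
        constructor
        · intro h
          exact absurd ((dvd_sub_right hy).1 (e.trans h)) hz'
        · intro h
          exact absurd (e.trans h) hz'
    rw [pow_dvd_iff_le_emultiplicity, key, hF]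
    norm_cast
    omega
end

section
/- Let p be a prime and X = X_1 × ⋯ × X_n ⊆ ℤ^n a p-integral d-grid, i.e. each X_j ⊆ ℤ is finite nonempty with d_j := |X_j| − 1 and p does not divide x − x̃ for any distinct x, x̃ ∈ X_j. Let P_1,…,P_m ∈ ℤ[X_1,…,X_n] and let k_1,…,k_m > 0 be natural numbers with Σ_{i=1}^m (p^{k_i} − 1) · deg(P_i) < d_1 + ⋯ + d_n. Then the number of points x ∈ X such that p^{k_i} divides P_i(x) for every i = 1,…,m is not equal to 1. -/
open MvPolynomial Finset

/-- The univariate divided-difference functional kills low powers. -/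
lemma olson_univ {K : Type*} [Field K] [CharZero K] (s : Finset ℤ) (e : ℕ)
    (he : e < s.card - 1) :
    ∑ x ∈ s, (x : K) ^ e * (∏ w ∈ s.erase x, ((x : K) - (w : K)))⁻¹ = 0 := by
  have h := Lagrange.coeff_eq_sum (F := K) (s := s) (v := fun z : ℤ => (z : K))
    (Int.cast_injective.injOn) (P := Polynomial.X ^ e)
    (by rw [Polynomial.degree_X_pow]; exact_mod_cast (by omega : e < s.card))
  rw [Polynomial.coeff_X_pow, if_neg (by omega)] at h
  rw [h]
  refine Finset.sum_congr rfl fun x _ => ?_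
  simp [div_eq_mul_inv]

lemma olson_grid {K : Type*} [Field K] [CharZero K] {n : ℕ}
    (X : Fin n → Finset ℤ) (f : MvPolynomial (Fin n) ℤ)
    (hf : f.totalDegree < ∑ j, ((X j).card - 1)) :
    ∑ x ∈ Fintype.piFinset X, ((eval x f : ℤ) : K) *
      ∏ j, (∏ w ∈ (X j).erase (x j), ((x j : K) - (w : K)))⁻¹ = 0 := by
  simp_rw [eval_eq', Int.cast_sum, Finset.sum_mul]
  rw [Finset.sum_comm]
  refine Finset.sum_eq_zero fun e he => ?_
  have hle := le_totalDegree he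
  rw [Finsupp.sum_fintype _ _ (fun _ => rfl)] at hle
  obtain ⟨j, -, hj⟩ := Finset.exists_lt_of_sum_lt (lt_of_le_of_lt hle hf)
  push_cast
  simp_rw [mul_assoc, ← Finset.prod_mul_distrib, ← Finset.mul_sum]
  rw [← Finset.prod_univ_sum X (fun j x => (x : K) ^ e j *
    (∏ w ∈ (X j).erase x, ((x : K) - (w : K)))⁻¹)]
  rw [Finset.prod_eq_zero (Finset.mem_univ j) (olson_univ (X j) (e j) hj), mul_zero]

lemma olson_indicator (p : ℕ) [hp : Fact p.Prime] (k : ℕ) (y : ℤ) :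
    ∃ a : ℤ, ∏ r ∈ range (p ^ k - 1), (y - ((r : ℤ) + 1)) = ((p ^ k - 1).factorial : ℤ) * a ∧
      (¬ (p : ℤ) ∣ a ↔ (p : ℤ) ^ k ∣ y) := by
  obtain ⟨N, hN⟩ : ∃ N, p ^ k = N + 1 :=
    ⟨p ^ k - 1, by have := pow_pos hp.out.pos k; omega⟩
  have hN' : p ^ k - 1 = N := by omega
  rw [hN']
  have key : ∀ M : ℕ, ∏ r ∈ range M, (y - ((r : ℤ) + 1)) = ∏ r ∈ range M, (y - M + r) := by
    intro M
    rw [← Finset.prod_range_reflect]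
    refine Finset.prod_congr rfl fun r hr => ?_
    have := Finset.mem_range.1 hr
    rw [Nat.cast_sub (by omega), Nat.cast_sub (by omega)]
    push_cast; ring
  obtain ⟨a, ha⟩ := Nat.factorial_coe_dvd_prod N (y - N)
  rw [← key] at ha
  refine ⟨a, ha, ?_, ?_⟩
  · intro hpa
    obtain ⟨b, hb⟩ := Nat.factorial_coe_dvd_prod (N + 1) (y - N)
    rw [Finset.prod_range_succ, ← key, ha, Nat.factorial_succ] at hb
    have hfac : ((N.factorial : ℕ) : ℤ) ≠ 0 := by exact_mod_cast N.factorial_ne_zero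
    have h2 : a * y = ((N + 1 : ℕ) : ℤ) * b := by
      apply mul_left_cancel₀ hfac
      push_cast at hb ⊢
      linear_combination hb
    rw [← hN] at h2
    push_cast at h2
    have hcop : IsCoprime ((p : ℤ) ^ k) a :=
      ((Nat.prime_iff_prime_int.1 hp.out).coprime_iff_not_dvd.2 hpa).pow_left
    exact hcop.dvd_of_dvd_mul_left ⟨b, h2⟩
  · intro hy hpa
    have h1 : ‖(a : ℚ_[p])‖ < 1 := Padic.norm_intCast_lt_one_iff.2 hpa
    have h2 : ‖((∏ r ∈ range N, (y - ((r : ℤ) + 1)) : ℤ) : ℚ_[p])‖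
        = ‖((N.factorial : ℕ) : ℚ_[p])‖ := by
      rw [← Finset.prod_range_add_one_eq_factorial]
      push_cast
      rw [norm_prod, norm_prod]
      refine Finset.prod_congr rfl fun r hr => ?_
      have hr := Finset.mem_range.1 hr
      have hlt : ‖(y : ℚ_[p])‖ < ‖((r : ℚ_[p]) + 1)‖ := by
        refine lt_of_le_of_lt ((Padic.norm_int_le_pow_iff_dvd y k).2 hy) ?_
        by_contra hcon
        push Not at hcon
        have h3 := (Padic.norm_int_le_pow_iff_dvd (p := p) ((r + 1 : ℕ) : ℤ) k).1
          (by push_cast; exact hcon)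
        have h4 : p ^ k ∣ r + 1 := by exact_mod_cast h3
        have := Nat.le_of_dvd (by omega) h4
        omega
      rw [sub_eq_add_neg, Padic.add_eq_max_of_ne (by rw [norm_neg]; exact hlt.ne), norm_neg]
      exact max_eq_right hlt.le
    rw [ha] at h2
    push_cast at h2
    rw [norm_mul] at h2
    have hpos : 0 < ‖((N.factorial : ℕ) : ℚ_[p])‖ :=
      norm_pos_iff.2 (by exact_mod_cast N.factorial_ne_zero)
    nlinarith

/-- Generalized Olson theorem: over a `p`-integral grid `X ⊆ ℤ^n`, if
`Σ_i (p^{k_i} − 1) deg(P_i) < Σ_j d_j`, then the set of grid points `x` with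
`p^{k_i} ∣ P_i(x)` for all `i` does not have exactly one element. -/
theorem olson_generalization (p : ℕ) (hp : p.Prime) {n m : ℕ}
    (X : Fin n → Finset ℤ) (hX : ∀ j, (X j).Nonempty)
    (d : Fin n → ℕ) (hd : ∀ j, d j = (X j).card - 1)
    (hpint : ∀ j, ∀ x ∈ X j, ∀ w ∈ X j, x ≠ w → ¬ (p : ℤ) ∣ (x - w))
    (P : Fin m → MvPolynomial (Fin n) ℤ) (k : Fin m → ℕ) (hk : ∀ i, 0 < k i)
    (hdeg : ∑ i, (p ^ (k i) - 1) * (P i).totalDegree < ∑ j, d j) :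
    {x : Fin n → ℤ | (∀ j, x j ∈ X j)
      ∧ ∀ i, ((p : ℤ) ^ (k i)) ∣ MvPolynomial.eval x (P i)}.ncard ≠ 1 := by
  haveI : Fact p.Prime := ⟨hp⟩
  intro hcard
  obtain ⟨x₀, hx₀⟩ := Set.ncard_eq_one.1 hcard
  have hiff : ∀ x : Fin n → ℤ, ((∀ j, x j ∈ X j) ∧
      ∀ i, ((p : ℤ) ^ (k i)) ∣ MvPolynomial.eval x (P i)) ↔ x = x₀ := fun x => by
    have := Set.ext_iff.1 hx₀ x
    simpa using this
  choose a ha ha' using fun i (y : ℤ) => olson_indicator p (k i) y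
  set f : MvPolynomial (Fin n) ℤ :=
    ∏ i, ∏ r ∈ range (p ^ k i - 1), (P i - C ((r : ℤ) + 1)) with hf
  have hfdeg : f.totalDegree < ∑ j, ((X j).card - 1) := by
    simp_rw [← hd]
    refine lt_of_le_of_lt ?_ hdeg
    refine (totalDegree_finsetProd _ _).trans (Finset.sum_le_sum fun i _ => ?_)
    refine (totalDegree_finsetProd _ _).trans ?_
    refine (Finset.sum_le_sum fun r _ => totalDegree_sub_C_le _ _).trans ?_
    simp
  set c : ℤ := ∏ i, ((p ^ k i - 1).factorial : ℤ) with hc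
  have hc0 : (c : ℚ_[p]) ≠ 0 := by
    have : c ≠ 0 := Finset.prod_ne_zero_iff.2 fun i _ => by
      exact_mod_cast Nat.factorial_ne_zero _
    exact_mod_cast this
  have hfe : ∀ x, eval x f = c * ∏ i, a i (eval x (P i)) := by
    intro x
    rw [hf, hc, ← Finset.prod_mul_distrib, map_prod]
    refine Finset.prod_congr rfl fun i _ => ?_
    rw [← ha, map_prod]
    simp only [map_sub, eval_C]
  have hsum := olson_grid (K := ℚ_[p]) X f hfdeg
  simp_rw [hfe, Int.cast_mul, mul_assoc, ← Finset.mul_sum] at hsum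
  have hsum := (mul_eq_zero.1 hsum).resolve_left hc0
  have hw : ∀ x ∈ Fintype.piFinset X,
      ‖∏ j, (∏ w ∈ (X j).erase (x j), ((x j : ℚ_[p]) - (w : ℚ_[p])))⁻¹‖ = 1 := by
    intro x hx
    rw [norm_prod]
    refine Finset.prod_eq_one fun j _ => ?_
    rw [norm_inv, norm_prod, Finset.prod_eq_one, inv_one]
    intro w hw
    rw [Finset.mem_erase] at hw
    have h1 := hpint j (x j) (Fintype.mem_piFinset.1 hx j) w hw.2 hw.1.symm
    rw [← Padic.norm_intCast_lt_one_iff (p := p)] at h1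
    rw [← Int.cast_sub]
    exact le_antisymm (Padic.norm_int_le_one _) (not_lt.1 h1)
  have hx₀' := (hiff x₀).2 rfl
  have hmem : x₀ ∈ Fintype.piFinset X := Fintype.mem_piFinset.2 hx₀'.1
  have hprime := Nat.prime_iff_prime_int.1 hp
  rw [← Finset.add_sum_erase _ _ hmem] at hsum
  have hrest : ‖∑ x ∈ (Fintype.piFinset X).erase x₀,
      (((∏ i, a i (eval x (P i)) : ℤ) : ℚ_[p]) *
      ∏ j, (∏ w ∈ (X j).erase (x j), ((x j : ℚ_[p]) - (w : ℚ_[p])))⁻¹)‖ < 1 := by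
    refine Finset.sum_induction _ (fun z : ℚ_[p] => ‖z‖ < 1) ?_ (by simp) ?_
    · intro u v hu hv
      exact lt_of_le_of_lt (Padic.nonarchimedean u v) (max_lt hu hv)
    · intro x hx
      rw [Finset.mem_erase] at hx
      rw [norm_mul, hw x hx.2, mul_one, Padic.norm_intCast_lt_one_iff, hprime.dvd_finset_prod_iff]
      by_contra hcon
      push Not at hcon
      exact hx.1 ((hiff x).1 ⟨Fintype.mem_piFinset.1 hx.2, fun i =>
        (ha' i _).1 (hcon i (Finset.mem_univ i))⟩)
  rw [← neg_eq_of_add_eq_zero_right hsum, norm_neg, norm_mul, hw x₀ hmem, mul_one,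
    Padic.norm_intCast_lt_one_iff, hprime.dvd_finset_prod_iff] at hrest
  obtain ⟨i, -, hi⟩ := hrest
  exact (ha' i _).2 (hx₀'.2 i) hi
end
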